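/- Assume n ≥ 4 is even. Then for every φ ∈ C^∞(S^{n-1}), the function P_h[φ] extends to a C^∞ function on the closed unit ball. Consequently, if u is H-harmonic on B_n with a boundary distribution, then for every integer k ≥ 0 the function N^k u has a boundary distribution. -/

import Mathlib

/-!
Both assertions come from one ordinary differential equation. Write a radius as `r = e^{-s}`. For
an `H`-harmonic `u` and a test function `Φ`, the pairing `y(s) = ∫ u(e^{-s} ξ) Φ(ξ) dσ(ξ)` satisfies
(`pair_ode`)

  `y'' = (n - 2) coth(s) y' - y₁`,

where `y₁` is the pairing of `u` with the spherical Laplacian of `Φ`: use the polar form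
`|x|² Δ = N² + (n - 2) N + Δ_S` and the symmetry of `Δ_S` on the sphere. Iterating `Δ_S` on `Φ` gives
an infinite chain of such equations. When `n - 2 = 2q` is even, all derivatives of the members of a
chain of polynomial growth at `s = 0` stay bounded (`ode_regularity`): the substitution
`z = y' / sinh` lowers the coefficient `n - 2` by `2`, so after `q` steps the singular term
disappears, and then each integration improves the growth exponent by one. No logarithm can occur.

For the second assertion, the pairings of a function with a boundary distribution are bounded near
`s = 0`, hence so are all their derivatives. Up to sign the `k`-th derivative is the pairing with
`N^k u`, and a function with a bounded derivative has a limit (`boundary_normal`).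

For the first, the kernel satisfies `P_h(rζ, ξ) = P_h(rξ, ζ)` for unit vectors, so
`s ↦ P_h[φ](e^{-s} ζ)` is the pairing of the `H`-harmonic function `P_h(·, ζ)` with `φ`. The regularity
result, which is uniform in `ζ`, bounds every `N^k P_h[φ]` on the ball (`NOp_Uint_bdd`). By rotation
invariance, tangential derivatives of `N^k P_h[φ]` are of the form `N^k P_h[ψ]`, and away from the
origin the gradient is a smooth combination of the normal and the tangential derivatives; by
induction all derivatives of `P_h[φ]` are bounded on the ball, which makes it extend smoothly to
the closed ball (`smooth_extension`).
-/

open MeasureTheory Metric Filter Topology Set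
open scoped ContDiff ENNReal NNReal

noncomputable section

/-- `E n` is the Euclidean space `ℝⁿ`. -/
abbrev E (n : ℕ) := EuclideanSpace ℝ (Fin n)

/-- The normalized surface measure `σ` on the unit sphere `S^{n-1}` (total mass `1`). -/
noncomputable def sphMeasure (n : ℕ) : Measure (E n) :=
  ((μH[(n : ℝ) - 1] (sphere (0 : E n) 1))⁻¹) • ((μH[(n : ℝ) - 1]).restrict (sphere (0 : E n) 1))

/-- The Euclidean Laplacian `Δu(x) = Σ ∂²u/∂x_i²`. -/
noncomputable def lap (n : ℕ) (u : E n → ℝ) (x : E n) : ℝ :=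
  ∑ i : Fin n, fderiv ℝ (fun y => fderiv ℝ u y (EuclideanSpace.single i 1)) x (EuclideanSpace.single i 1)

/-- The normal derivation operator `Nu(x) = Σ x_i ∂u/∂x_i(x)`, i.e. the derivative of `u`
at `x` in the direction `x`. -/
noncomputable def Nder (n : ℕ) (u : E n → ℝ) (x : E n) : ℝ := fderiv ℝ u x x

/-- `u` is `H`-harmonic on `B_n` :
`Du(x) = (1-|x|²)²Δu(x) + 2(n-2)(1-|x|²)Nu(x) = 0` on the unit ball. -/
def HHarmonic (n : ℕ) (u : E n → ℝ) : Prop :=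
  ∀ x ∈ ball (0 : E n) 1,
    (1 - ‖x‖ ^ 2) ^ 2 * lap n u x + 2 * ((n : ℝ) - 2) * (1 - ‖x‖ ^ 2) * Nder n u x = 0

/-- The hyperbolic Poisson kernel `P_h(x,ξ) = ((1-|x|²)/|x-ξ|²)^{n-1}`. -/
noncomputable def Ph (n : ℕ) (x ξ : E n) : ℝ := ((1 - ‖x‖ ^ 2) / ‖x - ξ‖ ^ 2) ^ (n - 1)

/-- The Euclidean Poisson kernel `P_e(x,ξ) = (1-|x|²)/|x-ξ|ⁿ`. -/
noncomputable def Pe (n : ℕ) (x ξ : E n) : ℝ := (1 - ‖x‖ ^ 2) / ‖x - ξ‖ ^ n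

/-- `u` has a boundary distribution : for every smooth `Φ` on the sphere,
`∫ u(rζ)Φ(ζ)dσ(ζ)` has a finite limit as `r → 1⁻`. -/
def HasBoundaryDistribution (n : ℕ) (u : E n → ℝ) : Prop :=
  ∀ Φ : E n → ℝ, ContDiff ℝ ∞ Φ →
    ∃ L : ℝ, Tendsto (fun r : ℝ => ∫ ζ, u (r • ζ) * Φ ζ ∂(sphMeasure n)) (𝓝[<] (1 : ℝ)) (𝓝 L)

/-- The operator `N = Σ x_i ∂/∂x_i` acting on functions. -/
noncomputable def NOp (n : ℕ) : (E n → ℝ) → (E n → ℝ) := fun u x => fderiv ℝ u x x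

/-! ### Primitives and growth exponents -/

/-- Mean value estimate on `[s, 1]`: a function whose derivative is `O(s ^ (-κ))`, `κ ≠ 1`, is
controlled by the primitive of the comparison function. -/
lemma primitive_estimate (f f' : ℝ → ℝ) (κ C : ℝ) (hκ : κ ≠ 1)
    (hd : ∀ s > 0, HasDerivAt f (f' s) s)
    (hC : ∀ s ∈ Ioc (0 : ℝ) 1, |f' s| ≤ C * s ^ (-κ)) (s : ℝ) (hs : s ∈ Ioc (0 : ℝ) 1) :
    |f s - f 1| ≤ |C| / (κ - 1) * (s ^ (-(κ - 1)) - 1) := by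
  have hs0 := hs.1
  have hB : ∀ t ∈ Icc (0:ℝ) (1 - s), HasDerivAt (fun t => |C| / (κ - 1) * ((1 - t) ^ (-(κ - 1)) - 1))
        (|C| * (1 - t) ^ (-κ)) t := by
      intro t ht
      have ht1 : 0 < 1 - t := by linarith [ht.2]
      have h := ((((hasDerivAt_id t).const_sub 1).rpow_const (p := -(κ - 1))
        (Or.inl ht1.ne')).sub_const 1).const_mul (|C| / (κ - 1))
      refine h.congr_deriv ?_
      have : κ - 1 ≠ 0 := sub_ne_zero.mpr hκ
      have h3 : -(κ - 1) - 1 = -κ := by ring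
      simp only [h3, id]
      field_simp
  have key : ∀ t ∈ Icc s 1, ‖f t - f 1‖ ≤ |C| / (κ - 1) * (t ^ (-(κ - 1)) - 1) := by
    have := image_norm_le_of_norm_deriv_right_le_deriv_boundary' (E := ℝ)
      (f := fun t => f (1 - t) - f 1) (f' := fun t => - f' (1 - t)) (a := 0) (b := 1 - s)
      (B := fun t => |C| / (κ - 1) * ((1 - t) ^ (-(κ - 1)) - 1))
      (B' := fun t => |C| * (1 - t) ^ (-κ)) ?_ ?_ ?_ ?_ ?_ ?_
    · intro t ht
      have h2 := @this (1 - t) ⟨by linarith [ht.2], by linarith [ht.1]⟩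
      simpa using h2
    · intro t ht
      have ht1 : 0 < 1 - t := by linarith [ht.2]
      have : HasDerivAt (fun t => f (1 - t) - f 1) (- f' (1 - t)) t := by
        have h := (hd (1 - t) ht1).scomp t ((hasDerivAt_id t).const_sub 1)
        simpa using h.sub_const (f 1)
      exact this.continuousAt.continuousWithinAt
    · intro t ht
      have ht1 : 0 < 1 - t := by linarith [ht.2]
      have : HasDerivAt (fun t => f (1 - t) - f 1) (- f' (1 - t)) t := by
        have h := (hd (1 - t) ht1).scomp t ((hasDerivAt_id t).const_sub 1)
        simpa using h.sub_const (f 1)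
      exact this.hasDerivWithinAt
    · simp
    · exact fun t ht => (hB t ht).continuousAt.continuousWithinAt
    · exact fun t ht => (hB t ⟨ht.1, ht.2.le⟩).hasDerivWithinAt
    · intro t ht
      have ht1 : 0 < 1 - t := by linarith [ht.2]
      have := hC (1 - t) ⟨ht1, by linarith [ht.1]⟩
      rw [norm_neg, Real.norm_eq_abs]
      exact this.trans (mul_le_mul_of_nonneg_right (le_abs_self C) (Real.rpow_nonneg ht1.le _))
  simpa using key s ⟨le_rfl, hs.2⟩

lemma growth_primitive {ι : Type} (f f' : ι → ℝ → ℝ) (κ : ℝ) (hκ : 1 < κ)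
    (hd : ∀ i, ∀ s > 0, HasDerivAt (f i) (f' i s) s)
    (hg : ∃ C, ∀ i, ∀ s ∈ Ioc (0 : ℝ) 1, |f' i s| ≤ C * s ^ (-κ))
    (h1 : ∃ C, ∀ i, |f i 1| ≤ C) :
    ∃ C, ∀ i, ∀ s ∈ Ioc (0 : ℝ) 1, |f i s| ≤ C * s ^ (-(κ - 1)) := by
  obtain ⟨C, hC⟩ := hg
  obtain ⟨D, hD⟩ := h1
  refine ⟨|D| + |C| / (κ - 1), fun i s hs => ?_⟩
  have h2 := primitive_estimate (f i) (f' i) κ C hκ.ne' (hd i) (hC i) s hs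
  have h3 : 1 ≤ s ^ (-(κ - 1)) :=
    Real.one_le_rpow_of_pos_of_le_one_of_nonpos hs.1 hs.2 (by linarith)
  have h4 : 0 ≤ |C| / (κ - 1) := div_nonneg (abs_nonneg _) (by linarith)
  have h5 := hD i
  have h6 := le_abs_self D
  have h7 := abs_nonneg D
  have h8 : |f i s| ≤ |f i s - f i 1| + |f i 1| := by
    simpa using abs_add_le (f i s - f i 1) (f i 1)
  nlinarith

lemma bounded_primitive {ι : Type} (f f' : ι → ℝ → ℝ) (κ : ℝ) (hκ : κ < 1)
    (hd : ∀ i, ∀ s > 0, HasDerivAt (f i) (f' i s) s)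
    (hg : ∃ C, ∀ i, ∀ s ∈ Ioc (0 : ℝ) 1, |f' i s| ≤ C * s ^ (-κ))
    (h1 : ∃ C, ∀ i, |f i 1| ≤ C) :
    ∃ C, ∀ i, ∀ s ∈ Ioc (0 : ℝ) 1, |f i s| ≤ C := by
  obtain ⟨C, hC⟩ := hg
  obtain ⟨D, hD⟩ := h1
  refine ⟨D + |C| / (1 - κ), fun i s hs => ?_⟩
  have h2 := primitive_estimate (f i) (f' i) κ C hκ.ne (hd i) (hC i) s hs
  have h3 : 0 ≤ s ^ (-(κ - 1)) := Real.rpow_nonneg hs.1.le _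
  have h4 : 0 ≤ |C| / (1 - κ) := div_nonneg (abs_nonneg _) (by linarith)
  have h9 : |C| / (κ - 1) = - (|C| / (1 - κ)) := by
    rw [← div_neg]; congr 1; ring
  rw [h9] at h2
  have h5 := hD i
  have h8 : |f i s| ≤ |f i s - f i 1| + |f i 1| := by
    simpa using abs_add_le (f i s - f i 1) (f i 1)
  nlinarith

/-- Uniform growth `f i s = O(s ^ (-(K + 1/2)))` as `s → 0⁺`. The exponents are half-integers so
that integrating never produces a logarithm. -/
def Growth {ι : Type} (K : ℕ) (f : ι → ℝ → ℝ) : Prop :=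
  ∃ C, ∀ i, ∀ s ∈ Ioc (0 : ℝ) 1, |f i s| ≤ C * s ^ (-((K : ℝ) + 1 / 2))

/-- All derivatives are bounded on `(0, 1]`, uniformly in the parameter. -/
def BddDerivs {ι : Type} (f : ι → ℝ → ℝ) : Prop :=
  ∀ k : ℕ, ∃ C, ∀ i, ∀ s ∈ Ioc (0 : ℝ) 1, |iteratedDeriv k (f i) s| ≤ C

section growth
variable {ι : Type} {f g : ι → ℝ → ℝ} {K L : ℕ}

lemma Growth.mono (h : Growth K f) (hKL : K ≤ L) : Growth L f := by
  obtain ⟨C, hC⟩ := h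
  refine ⟨|C|, fun i s hs => (hC i s hs).trans ?_⟩
  have h1 : s ^ (-((K : ℝ) + 1 / 2)) ≤ s ^ (-((L : ℝ) + 1 / 2)) := by
    apply Real.rpow_le_rpow_of_exponent_ge hs.1 hs.2
    have : (K : ℝ) ≤ L := by exact_mod_cast hKL
    linarith
  exact (mul_le_mul_of_nonneg_right (le_abs_self C) (Real.rpow_nonneg hs.1.le _)).trans
    (mul_le_mul_of_nonneg_left h1 (abs_nonneg _))

lemma growth_of_bdd (h : ∃ C, ∀ i, ∀ s ∈ Ioc (0 : ℝ) 1, |f i s| ≤ C) : Growth K f := by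
  obtain ⟨C, hC⟩ := h
  refine ⟨|C|, fun i s hs => (hC i s hs).trans ?_⟩
  have h1 : 1 ≤ s ^ (-((K : ℝ) + 1 / 2)) :=
    Real.one_le_rpow_of_pos_of_le_one_of_nonpos hs.1 hs.2 (by
      have : (0 : ℝ) ≤ K := Nat.cast_nonneg _
      linarith)
  nlinarith [le_abs_self C, abs_nonneg C]

lemma Growth.add (hf : Growth K f) (hg : Growth K g) : Growth K (fun i s => f i s + g i s) := by
  obtain ⟨C, hC⟩ := hf
  obtain ⟨D, hD⟩ := hg
  refine ⟨C + D, fun i s hs => (abs_add_le _ _).trans ?_⟩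
  rw [add_mul]
  exact add_le_add (hC i s hs) (hD i s hs)

/-- Multiplying by a factor that is `O(s ^ (-L))` raises the growth exponent by `L`. -/
lemma Growth.mul (hf : Growth K f) (a : ι → ℝ → ℝ)
    (ha : ∃ D, ∀ i, ∀ s ∈ Ioc (0 : ℝ) 1, |a i s| ≤ D * (s⁻¹) ^ L) :
    Growth (K + L) (fun i s => a i s * f i s) := by
  obtain ⟨C, hC⟩ := hf
  obtain ⟨D, hD⟩ := ha
  refine ⟨D * C, fun i s hs => ?_⟩
  rw [abs_mul]
  refine (mul_le_mul (hD i s hs) (hC i s hs) (abs_nonneg _)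
    ((abs_nonneg _).trans (hD i s hs))).trans (le_of_eq ?_)
  have : s ^ (-(((K + L : ℕ) : ℝ) + 1 / 2)) = (s⁻¹) ^ L * s ^ (-((K : ℝ) + 1 / 2)) := by
    rw [inv_pow, ← Real.rpow_natCast, ← Real.rpow_neg hs.1.le, ← Real.rpow_add hs.1]
    congr 1; push_cast; ring
  rw [this]; ring

lemma Growth.congr (hf : Growth K f) (h : ∀ i, ∀ s ∈ Ioc (0 : ℝ) 1, g i s = f i s) :
    Growth K g := by
  obtain ⟨C, hC⟩ := hf
  exact ⟨C, fun i s hs => by rw [h i s hs]; exact hC i s hs⟩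

lemma Growth.const_mul (hf : Growth K f) (c : ℝ) : Growth K (fun i s => c * f i s) := by
  have := hf.mul (L := 0) (fun _ _ => c) ⟨|c|, by simp⟩
  simpa using this

lemma Growth.at_one (hf : Growth K f) : ∃ C, ∀ i, |f i 1| ≤ C := by
  obtain ⟨C, hC⟩ := hf
  exact ⟨C, fun i => by simpa using hC i 1 ⟨one_pos, le_rfl⟩⟩

/-- Integrating lowers a growth exponent by one. -/
lemma Growth.primitive (f' : ι → ℝ → ℝ) (hd : ∀ i, ∀ s > 0, HasDerivAt (f i) (f' i s) s)
    (hg : Growth (K + 1) f') (h1 : ∃ C, ∀ i, |f i 1| ≤ C) : Growth K f := by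
  have h := growth_primitive f f' (((K + 1 : ℕ) : ℝ) + 1 / 2) (by
    have : (0 : ℝ) ≤ K := Nat.cast_nonneg _
    push_cast; linarith) hd hg h1
  refine h.imp fun C hC i s hs => (hC i s hs).trans (le_of_eq ?_)
  congr 3; push_cast; ring

lemma Growth.primitive_zero (f' : ι → ℝ → ℝ) (hd : ∀ i, ∀ s > 0, HasDerivAt (f i) (f' i s) s)
    (hg : Growth 0 f') (h1 : ∃ C, ∀ i, |f i 1| ≤ C) :
    ∃ C, ∀ i, ∀ s ∈ Ioc (0 : ℝ) 1, |f i s| ≤ C :=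
  bounded_primitive f f' (((0 : ℕ) : ℝ) + 1 / 2) (by norm_num) hd hg h1

lemma Growth.primitive' (f' : ι → ℝ → ℝ) (hd : ∀ i, ∀ s > 0, HasDerivAt (f i) (f' i s) s)
    (hg : Growth K f') (h1 : ∃ C, ∀ i, |f i 1| ≤ C) : Growth K f :=
  Growth.primitive f' hd (hg.mono (Nat.le_succ K)) h1

end growth

/-! ### Regularity of a singular differential equation -/

section ode
variable {ι : Type}

lemma contDiffAt_of_Ioi {f : ℝ → ℝ} (hf : ContDiffOn ℝ ∞ f (Ioi 0)) {s : ℝ} (hs : 0 < s) :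
    ContDiffAt ℝ ∞ f s := hf.contDiffAt (Ioi_mem_nhds hs)

lemma hasDerivAt_of_Ioi {f : ℝ → ℝ} (hf : ContDiffOn ℝ ∞ f (Ioi 0)) {s : ℝ} (hs : 0 < s) :
    HasDerivAt f (deriv f s) s :=
  ((contDiffAt_of_Ioi hf hs).differentiableAt (by simp)).hasDerivAt

lemma contDiffOn_deriv_Ioi {f : ℝ → ℝ} (hf : ContDiffOn ℝ ∞ f (Ioi 0)) :
    ContDiffOn ℝ ∞ (deriv f) (Ioi 0) :=
  hf.deriv_of_isOpen isOpen_Ioi (by simp)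

lemma iteratedDeriv_congr_Ioi {f g : ℝ → ℝ} (h : ∀ s > 0, f s = g s) (k : ℕ) {s : ℝ} (hs : 0 < s) :
    iteratedDeriv k f s = iteratedDeriv k g s := by
  apply Filter.EventuallyEq.iteratedDeriv_eq
  filter_upwards [Ioi_mem_nhds hs] with t ht using h t ht

lemma BddDerivs.congr {f g : ι → ℝ → ℝ} (hf : BddDerivs f) (h : ∀ i, ∀ s > 0, g i s = f i s) :
    BddDerivs g := fun k => (hf k).imp fun C hC i s hs => by
  rw [iteratedDeriv_congr_Ioi (h i) k hs.1]; exact hC i s hs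

lemma BddDerivs.mul {f g : ι → ℝ → ℝ} (hf : BddDerivs f) (hg : BddDerivs g)
    (sf : ∀ i, ContDiffOn ℝ ∞ (f i) (Ioi 0)) (sg : ∀ i, ContDiffOn ℝ ∞ (g i) (Ioi 0)) :
    BddDerivs (fun i s => f i s * g i s) := by
  intro k
  choose C hC using hf
  choose D hD using hg
  refine ⟨∑ j ∈ Finset.range (k + 1), (k.choose j : ℝ) * C j * D (k - j), fun i s hs => ?_⟩
  rw [iteratedDeriv_fun_mul ((contDiffAt_of_Ioi (sf i) hs.1).of_le (by exact_mod_cast le_top))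
    ((contDiffAt_of_Ioi (sg i) hs.1).of_le (by exact_mod_cast le_top))]
  refine (Finset.abs_sum_le_sum_abs _ _).trans (Finset.sum_le_sum fun j _ => ?_)
  rw [abs_mul, abs_mul, Nat.abs_cast]
  have h0 := hC j i s hs
  exact mul_le_mul (mul_le_mul_of_nonneg_left h0 (Nat.cast_nonneg _)) (hD _ i s hs)
    (abs_nonneg _) (mul_nonneg (Nat.cast_nonneg _) ((abs_nonneg _).trans h0))

lemma bddDerivs_const_fun {f : ℝ → ℝ} (hf : ContDiff ℝ ∞ f) : BddDerivs (fun _ : ι => f) := by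
  intro k
  have hc : Continuous (iteratedDeriv k f) := hf.continuous_iteratedDeriv k (by exact_mod_cast le_top)
  obtain ⟨C, hC⟩ := (isCompact_Icc (a := (0 : ℝ)) (b := 1)).exists_bound_of_continuousOn
    hc.continuousOn
  exact ⟨C, fun _ s hs => hC s ⟨hs.1.le, hs.2⟩⟩

lemma bddDerivs_of_deriv {f : ι → ℝ → ℝ}
    (h0 : ∃ C, ∀ i, ∀ s ∈ Ioc (0 : ℝ) 1, |f i s| ≤ C)
    (h1 : BddDerivs (fun i => deriv (f i))) : BddDerivs f := by
  rintro (_ | k)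
  · simpa using h0
  · simpa [iteratedDeriv_succ'] using h1 k

lemma inv_sinh_le {s : ℝ} (hs : 0 < s) : |(Real.sinh s)⁻¹| ≤ s⁻¹ := by
  have h : s ≤ Real.sinh s := Real.self_le_sinh_iff.mpr hs.le
  rw [abs_of_nonneg (inv_nonneg.mpr (hs.le.trans h))]
  exact inv_anti₀ hs h

/-- The constant coefficient case `y_j'' = - y_{j+1} - c y_j`: every integration improves the
growth exponent until all functions and all derivatives are bounded. -/
lemma ode_base (c : ℝ) (y : ℕ → ι → ℝ → ℝ) (hs : ∀ j i, ContDiffOn ℝ ∞ (y j i) (Ioi 0))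
    (heq : ∀ j i, ∀ s > 0, deriv (deriv (y j i)) s = - y (j + 1) i s - c * y j i s)
    (K : ℕ) (hg : ∀ j, Growth K (y j))
    (h1 : ∀ j, ∃ C, ∀ i, |deriv (y j i) 1| ≤ C) (j : ℕ) : BddDerivs (y j) := by
  have hd : ∀ j i, ∀ s > 0, HasDerivAt (y j i) (deriv (y j i) s) s :=
    fun j i s h => hasDerivAt_of_Ioi (hs j i) h
  have hdd : ∀ j i, ∀ s > 0, HasDerivAt (deriv (y j i)) (deriv (deriv (y j i)) s) s :=
    fun j i s h => hasDerivAt_of_Ioi (contDiffOn_deriv_Ioi (hs j i)) h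
  have hg2 : ∀ K, (∀ j, Growth K (y j)) → ∀ j, Growth K (fun i s => deriv (deriv (y j i)) s) :=
    fun K hK j => (((hK (j + 1)).const_mul (-1)).add ((hK j).const_mul (-c))).congr
      fun i s h => by rw [heq j i s h.1]; ring
  have hK0 : ∀ j, Growth 0 (y j) := by
    induction K with
    | zero => exact hg
    | succ K ih =>
      refine ih fun j => ?_
      have h2 : Growth K (fun i s => deriv (y j i) s) :=
        Growth.primitive _ (hdd j) (hg2 _ hg j) (h1 j)
      exact Growth.primitive' _ (hd j) h2 (hg j).at_one
  have hb1 : ∀ j, ∃ C, ∀ i, ∀ s ∈ Ioc (0 : ℝ) 1, |deriv (y j i) s| ≤ C := fun j =>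
    Growth.primitive_zero _ (hdd j) (hg2 _ hK0 j) (h1 j)
  have hb0 : ∀ j, ∃ C, ∀ i, ∀ s ∈ Ioc (0 : ℝ) 1, |y j i s| ≤ C := fun j =>
    Growth.primitive_zero _ (hd j) (growth_of_bdd (hb1 j)) (hg j).at_one
  intro k
  induction k using Nat.twoStepInduction generalizing j with
  | zero => simpa using hb0 j
  | one => simpa using hb1 j
  | more k ih _ =>
    obtain ⟨C, hC⟩ := ih (j + 1)
    obtain ⟨D, hD⟩ := ih j
    refine ⟨C + |c| * D, fun i s h => ?_⟩
    rw [iteratedDeriv_succ', iteratedDeriv_succ', iteratedDeriv_congr_Ioi (heq j i) k h.1]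
    have e : iteratedDeriv k (fun s => - y (j + 1) i s - c * y j i s) s =
        - iteratedDeriv k (y (j + 1) i) s - c * iteratedDeriv k (y j i) s := by
      have ha := (contDiffAt_of_Ioi (hs (j + 1) i) h.1).of_le (m := k) (by exact_mod_cast le_top)
      have hb := (contDiffAt_of_Ioi (hs j i) h.1).of_le (m := k) (by exact_mod_cast le_top)
      rw [iteratedDeriv_fun_sub ha.neg (contDiffAt_const.mul hb), iteratedDeriv_fun_neg,
        iteratedDeriv_const_mul_field]
    rw [e]
    refine (abs_sub _ _).trans ?_
    rw [abs_neg, abs_mul]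
    exact add_le_add (hC i s h) (mul_le_mul_of_nonneg_left (hD i s h) (abs_nonneg _))

/-- The shift `z = y' / sinh` turns `y'' = m coth · y' - y₁ - c y` into the same equation with
`m - 2` and `c + 1 - m`. -/
lemma ode_shift (m c : ℝ) (y y₁ : ℝ → ℝ) (hy : ContDiffOn ℝ ∞ y (Ioi 0))
    (hy₁ : ContDiffOn ℝ ∞ y₁ (Ioi 0))
    (heq : ∀ s > 0, deriv (deriv y) s =
      m * (Real.cosh s / Real.sinh s) * deriv y s - y₁ s - c * y s) (s : ℝ) (hs : 0 < s) :
    deriv (fun s => deriv y s / Real.sinh s) s =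
      (m - 1) * (Real.cosh s / Real.sinh s ^ 2) * deriv y s - (y₁ s + c * y s) / Real.sinh s ∧
    deriv (deriv (fun s => deriv y s / Real.sinh s)) s =
      (m - 2) * (Real.cosh s / Real.sinh s) * deriv (fun s => deriv y s / Real.sinh s) s
        - deriv y₁ s / Real.sinh s - (c + 1 - m) * (deriv y s / Real.sinh s) := by
  have hd1 : ∀ s > 0, HasDerivAt y (deriv y s) s := fun s h => hasDerivAt_of_Ioi hy h
  have hd1' : ∀ s > 0, HasDerivAt y₁ (deriv y₁ s) s := fun s h => hasDerivAt_of_Ioi hy₁ h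
  have hd2 : ∀ s > 0, HasDerivAt (deriv y) (deriv (deriv y) s) s :=
    fun s h => hasDerivAt_of_Ioi (contDiffOn_deriv_Ioi hy) h
  have hne : ∀ s > 0, Real.sinh s ≠ 0 := fun s h => (Real.sinh_pos_iff.mpr h).ne'
  have e1 : ∀ s > 0, deriv (fun s => deriv y s / Real.sinh s) s =
      (m - 1) * (Real.cosh s / Real.sinh s ^ 2) * deriv y s
        - (y₁ s + c * y s) / Real.sinh s := by
    intro s h
    refine (HasDerivAt.deriv ((hd2 s h).div (Real.hasDerivAt_sinh s) (hne s h))).trans ?_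
    rw [heq s h]
    have := hne s h
    field_simp
    ring
  refine ⟨e1 s hs, ?_⟩
  have hloc : deriv (fun s => deriv y s / Real.sinh s) =ᶠ[𝓝 s] fun s =>
      (m - 1) * (Real.cosh s / Real.sinh s ^ 2) * deriv y s
        - (y₁ s + c * y s) / Real.sinh s := by
    filter_upwards [Ioi_mem_nhds hs] with t ht using e1 t ht
  have hS := hne s hs
  rw [hloc.deriv_eq, e1 s hs]
  have hder := ((((Real.hasDerivAt_cosh s).div ((Real.hasDerivAt_sinh s).pow 2)
    (pow_ne_zero 2 hS)).const_mul (m - 1)).mul (hd2 s hs)).sub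
    (((hd1' s hs).add ((hd1 s hs).const_mul c)).div (Real.hasDerivAt_sinh s) hS)
  refine (HasDerivAt.deriv hder).trans ?_
  rw [heq s hs]
  simp only [Pi.pow_apply, Pi.div_apply, Pi.add_apply, Nat.cast_ofNat, Nat.add_one_sub_one, pow_one]
  have hcs : Real.cosh s ^ 2 = Real.sinh s ^ 2 + 1 := Real.cosh_sq s
  generalize Real.sinh s = S at *
  generalize Real.cosh s = T at *
  field_simp
  ring

/-- Solutions of `y_j'' = 2q coth(s) y_j' - y_{j+1} - c y_j` of (uniform) polynomial growth at
`s = 0` have all derivatives (uniformly) bounded near `s = 0`. Evenness of the coefficient `2q` is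
what makes the shifts end at the constant coefficient equation. -/
lemma ode_regularity (q : ℕ) : ∀ (c : ℝ) (y : ℕ → ι → ℝ → ℝ)
    (_ : ∀ j i, ContDiffOn ℝ ∞ (y j i) (Ioi 0))
    (_ : ∀ j i, ∀ s > 0, deriv (deriv (y j i)) s =
      2 * q * (Real.cosh s / Real.sinh s) * deriv (y j i) s - y (j + 1) i s - c * y j i s)
    (K : ℕ) (_ : ∀ j, Growth K (y j))
    (_ : ∀ j, ∃ C, ∀ i, |deriv (y j i) 1| ≤ C) (j : ℕ), BddDerivs (y j) := by
  induction q with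
  | zero =>
    intro c y hs heq K hg h1 j
    exact ode_base c y hs (fun j i s h => by rw [heq j i s h]; simp) K hg h1 j
  | succ q ih =>
    intro c y hs heq K hg h1 j
    have hS : ∀ s > 0, 0 < Real.sinh s := fun s h => Real.sinh_pos_iff.mpr h
    have hSmooth : ContDiffOn ℝ ∞ Real.sinh (Ioi 0) := Real.contDiff_sinh.contDiffOn
    have hd : ∀ j i, ∀ s > 0, HasDerivAt (y j i) (deriv (y j i) s) s :=
      fun j i s h => hasDerivAt_of_Ioi (hs j i) h
    have hdd : ∀ j i, ∀ s > 0, HasDerivAt (deriv (y j i)) (deriv (deriv (y j i)) s) s :=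
      fun j i s h => hasDerivAt_of_Ioi (contDiffOn_deriv_Ioi (hs j i)) h
    have hshift := fun j i s (h : 0 < s) => ode_shift (2 * (q + 1 : ℕ)) c (y j i) (y (j + 1) i)
      (hs j i) (hs (j + 1) i) (heq j i) s h
    set z : ℕ → ι → ℝ → ℝ := fun j i s => deriv (y j i) s / Real.sinh s with hz
    have hzs : ∀ j i, ContDiffOn ℝ ∞ (z j i) (Ioi 0) := fun j i =>
      (contDiffOn_deriv_Ioi (hs j i)).div hSmooth fun s h => (hS s h).ne'
    -- the integrating factor `sinh ^ (-m)` turns the equation into one for `(y' / sinh ^ m)'`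
    have hv : ∀ j i, ∀ s > 0, HasDerivAt (fun s => deriv (y j i) s / Real.sinh s ^ (2 * (q + 1)))
        (((Real.sinh s)⁻¹) ^ (2 * (q + 1)) * (- y (j + 1) i s + (-c) * y j i s)) s := by
      intro j i s h
      refine ((hdd j i s h).div ((Real.hasDerivAt_sinh s).pow _)
        (pow_ne_zero _ (hS s h).ne')).congr_deriv ?_
      rw [heq j i s h]
      have := (hS s h).ne'
      rw [show 2 * (q + 1) - 1 = 2 * q + 1 by omega]
      simp only [Pi.pow_apply, inv_pow]
      push_cast
      rw [show 2 * (q + 1) = 2 * q + 1 + 1 by ring, pow_succ _ (2 * q + 1)]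
      field_simp
      ring
    have hinv : ∀ L : ℕ, ∃ D, ∀ _ : ι, ∀ s ∈ Ioc (0 : ℝ) 1,
        |((Real.sinh s)⁻¹) ^ L| ≤ D * (s⁻¹) ^ L := fun L => ⟨1, fun _ s h => by
      rw [one_mul, abs_pow]
      exact pow_le_pow_left₀ (abs_nonneg _) (inv_sinh_le h.1) _⟩
    have hgy' : ∀ j, Growth (K + 2 * (q + 1)) (fun i s => deriv (y j i) s) := by
      intro j
      have h2 := (((hg (j + 1)).const_mul (-1)).add ((hg j).const_mul (-c))).mul
        (L := 2 * (q + 1)) (fun _ s => ((Real.sinh s)⁻¹) ^ (2 * (q + 1))) (hinv _)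
      have h3 : Growth (K + 2 * (q + 1))
          (fun i s => deriv (y j i) s / Real.sinh s ^ (2 * (q + 1))) := by
        refine Growth.primitive' _ (hv j) (by simpa using h2) ?_
        obtain ⟨C, hC⟩ := h1 j
        refine ⟨C / |Real.sinh 1 ^ (2 * (q + 1))|, fun i => ?_⟩
        rw [abs_div]
        exact div_le_div_of_nonneg_right (hC i) (abs_nonneg _)
      have h4 := h3.mul (L := 0) (fun _ s => Real.sinh s ^ (2 * (q + 1)))
        ⟨Real.sinh 1 ^ (2 * (q + 1)), fun _ s h => by
          rw [pow_zero, mul_one, abs_of_nonneg (pow_nonneg (hS s h.1).le _)]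
          exact pow_le_pow_left₀ (hS s h.1).le (Real.sinh_le_sinh.mpr h.2) _⟩
      refine h4.congr fun i s h => ?_
      have := (hS s h.1).ne'
      field_simp
    have hgz : ∀ j, Growth (K + 2 * (q + 1) + 1) (z j) := fun j =>
      ((hgy' j).mul (L := 1) (fun _ s => ((Real.sinh s)⁻¹) ^ 1) (hinv 1)).congr
        fun i s h => by simp only [hz]; rw [pow_one, div_eq_inv_mul]
    have hz1 : ∀ j, ∃ C, ∀ i, |deriv (z j i) 1| ≤ C := by
      intro j
      obtain ⟨A, hA⟩ := h1 j
      obtain ⟨B, hB⟩ := (hg j).at_one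
      obtain ⟨B', hB'⟩ := (hg (j + 1)).at_one
      refine ⟨|(2 * ((q + 1 : ℕ) : ℝ) - 1) * (Real.cosh 1 / Real.sinh 1 ^ 2)| * A
        + (B' + |c| * B) / |Real.sinh 1|, fun i => ?_⟩
      rw [(hshift j i 1 one_pos).1]
      refine (abs_sub _ _).trans (add_le_add ?_ ?_)
      · rw [abs_mul]
        exact mul_le_mul_of_nonneg_left (hA i) (abs_nonneg _)
      · rw [abs_div]
        refine div_le_div_of_nonneg_right ((abs_add_le _ _).trans ?_) (abs_nonneg _)
        rw [abs_mul]
        exact add_le_add (hB' i) (mul_le_mul_of_nonneg_left (hB i) (abs_nonneg _))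
    have hzb : ∀ j, BddDerivs (z j) := ih (c + 1 - 2 * (q + 1 : ℕ)) z hzs (fun j i s h => by
      rw [(hshift j i s h).2]; push_cast; ring) _ hgz hz1
    have hy' : BddDerivs (fun i => deriv (y j i)) :=
      ((bddDerivs_const_fun Real.contDiff_sinh).mul (hzb j) (fun _ => hSmooth)
        (hzs j)).congr fun i s h => by
          simp only [hz]; have := (hS s h).ne'; field_simp
    refine bddDerivs_of_deriv ?_ hy'
    have h0 : ∃ C, ∀ i, ∀ s ∈ Ioc (0 : ℝ) 1, |deriv (y j i) s| ≤ C := by simpa using hy' 0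
    exact Growth.primitive_zero _ (hd j) (growth_of_bdd h0) (hg j).at_one

end ode

/-! ### Integration over the sphere -/

section measure
variable {n : ℕ}

/-- The normalization makes `sphMeasure n` finite in every case: where the Hausdorff measure of the
sphere is `0` or `∞`, it degenerates to the zero measure. -/
instance sphMeasure_finite (n : ℕ) : IsFiniteMeasure (sphMeasure n) := by
  constructor
  unfold sphMeasure
  rw [Measure.smul_apply, Measure.restrict_apply_univ, smul_eq_mul]
  set m := μH[(n : ℝ) - 1] (sphere (0 : E n) 1)
  rcases eq_or_ne m ∞ with h | h
  · simp [h]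
  rcases eq_or_ne m 0 with h0 | h0
  · simp [h0]
  · rw [ENNReal.inv_mul_cancel h0 h]; exact ENNReal.one_lt_top

lemma sphMeasure_restrict (n : ℕ) :
    (sphMeasure n).restrict (sphere (0 : E n) 1) = sphMeasure n := by
  unfold sphMeasure
  rw [Measure.restrict_smul, Measure.restrict_restrict isClosed_sphere.measurableSet, inter_self]

lemma ae_sphere (n : ℕ) : ∀ᵐ ξ ∂(sphMeasure n), ξ ∈ sphere (0 : E n) 1 := by
  rw [← sphMeasure_restrict]
  exact ae_restrict_mem isClosed_sphere.measurableSet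

lemma measurePreserving_sph (e : E n ≃ₗᵢ[ℝ] E n) :
    MeasurePreserving e (sphMeasure n) (sphMeasure n) := by
  have h := (e.toIsometryEquiv.measurePreserving_hausdorffMeasure ((n : ℝ) - 1)).restrict_preimage
    (s := sphere (0 : E n) 1) isClosed_sphere.measurableSet
  have hp : (e.toIsometryEquiv : E n → E n) ⁻¹' (sphere (0 : E n) 1) = sphere (0 : E n) 1 := by
    ext x; simp
  rw [hp] at h
  exact h.smul_measure _

variable {F : Type} [NormedAddCommGroup F] [NormedSpace ℝ F]

lemma aesm_sph {f : E n → F} (hf : ContinuousOn f (sphere (0 : E n) 1)) :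
    AEStronglyMeasurable f (sphMeasure n) := by
  rw [← sphMeasure_restrict]
  exact hf.aestronglyMeasurable isClosed_sphere.measurableSet

lemma integrable_sph {f : E n → F} (hf : ContinuousOn f (sphere (0 : E n) 1)) :
    Integrable f (sphMeasure n) := by
  rw [← sphMeasure_restrict]
  exact hf.integrableOn_compact (isCompact_sphere _ _)

lemma integral_sph_congr {f g : E n → F} (h : ∀ ξ ∈ sphere (0 : E n) 1, f ξ = g ξ) :
    ∫ ξ, f ξ ∂(sphMeasure n) = ∫ ξ, g ξ ∂(sphMeasure n) :=
  integral_congr_ae ((ae_sphere n).mono h)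

lemma norm_integral_sph_le {f : E n → F} {C : ℝ} (h : ∀ ξ ∈ sphere (0 : E n) 1, ‖f ξ‖ ≤ C) :
    ‖∫ ξ, f ξ ∂(sphMeasure n)‖ ≤ C * (sphMeasure n).real univ :=
  norm_integral_le_of_norm_le_const ((ae_sphere n).mono h)

variable {V : Type} [NormedAddCommGroup V] [NormedSpace ℝ V] [FiniteDimensional ℝ V]

/-- Differentiation under the integral sign over the sphere. -/
lemma hasFDerivAt_integral_sph {f : V → E n → F} {f' : V → E n → V →L[ℝ] F} {O : Set V}
    (hO : IsOpen O)
    (hf : ∀ v ∈ O, ContinuousOn (f v) (sphere (0 : E n) 1))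
    (hf' : ContinuousOn (fun p : V × E n => f' p.1 p.2) (O ×ˢ sphere (0 : E n) 1))
    (hd : ∀ v ∈ O, ∀ ξ ∈ sphere (0 : E n) 1, HasFDerivAt (f · ξ) (f' v ξ) v)
    {v : V} (hv : v ∈ O) :
    HasFDerivAt (fun v => ∫ ξ, f v ξ ∂(sphMeasure n)) (∫ ξ, f' v ξ ∂(sphMeasure n)) v := by
  have : ProperSpace V := FiniteDimensional.proper ℝ V
  obtain ⟨ε, hε, hball⟩ := Metric.nhds_basis_closedBall.mem_iff.mp (hO.mem_nhds hv)
  obtain ⟨C, hC⟩ := ((isCompact_closedBall v ε).prod (isCompact_sphere (0 : E n) 1))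
    |>.exists_bound_of_continuousOn (hf'.mono (prod_mono hball le_rfl))
  refine hasFDerivAt_integral_of_dominated_of_fderiv_le (bound := fun _ => C)
    (closedBall_mem_nhds v hε) ?_ (integrable_sph (hf v hv)) ?_ ?_ (integrable_const C) ?_
  · filter_upwards [hO.mem_nhds hv] with w hw using aesm_sph (hf w hw)
  · exact aesm_sph (hf'.comp (f := fun ξ => (v, ξ)) (by fun_prop) fun ξ hξ => ⟨hv, hξ⟩)
  · filter_upwards [ae_sphere n] with ξ hξ w hw using hC (w, ξ) ⟨hw, hξ⟩
  · filter_upwards [ae_sphere n] with ξ hξ w hw using hd w (hball hw) ξ hξ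

/-- The derivative in the first variable of a jointly smooth function. -/
def fderivFst (f : V × E n → F) (p : V × E n) : V →L[ℝ] F :=
  (fderiv ℝ f p).comp (ContinuousLinearMap.inl ℝ V (E n))

lemma fderivFst_contDiffOn {f : V × E n → F} {Ω : Set (V × E n)} (hΩ : IsOpen Ω)
    (hf : ContDiffOn ℝ ∞ f Ω) : ContDiffOn ℝ ∞ (fderivFst f) Ω :=
  (hf.fderiv_of_isOpen hΩ (by simp)).clm_comp contDiffOn_const

lemma hasFDerivAt_slice {f : V × E n → F} {Ω : Set (V × E n)} (hΩ : IsOpen Ω)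
    (hf : ContDiffOn ℝ ∞ f Ω) {v : V} {ξ : E n} (h : (v, ξ) ∈ Ω) :
    HasFDerivAt (fun v => f (v, ξ)) (fderivFst f (v, ξ)) v :=
  ((hf.contDiffAt (hΩ.mem_nhds h)).differentiableAt (by simp)).hasFDerivAt.comp v
    (hasFDerivAt_prodMk_left v ξ)

lemma hasFDerivAt_integral_smooth {f : V × E n → F} {Ω : Set (V × E n)} (hΩ : IsOpen Ω)
    (hf : ContDiffOn ℝ ∞ f Ω) {O : Set V} (hO : IsOpen O) (hsub : O ×ˢ sphere (0 : E n) 1 ⊆ Ω)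
    {v : V} (hv : v ∈ O) :
    HasFDerivAt (fun v => ∫ ξ, f (v, ξ) ∂(sphMeasure n))
      (∫ ξ, fderivFst f (v, ξ) ∂(sphMeasure n)) v :=
  hasFDerivAt_integral_sph hO
    (fun w hw => hf.continuousOn.comp (f := fun ξ => (w, ξ)) (by fun_prop)
      fun _ hξ => hsub ⟨hw, hξ⟩)
    ((fderivFst_contDiffOn hΩ hf).continuousOn.mono hsub)
    (fun _ hw _ hξ => hasFDerivAt_slice hΩ hf (hsub ⟨hw, hξ⟩)) hv

lemma contDiffOn_integral_aux {Ω : Set (V × E n)} (hΩ : IsOpen Ω)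
    {O : Set V} (hO : IsOpen O) (hsub : O ×ˢ sphere (0 : E n) 1 ⊆ Ω) (k : ℕ) :
    ∀ {F : Type} [NormedAddCommGroup F] [NormedSpace ℝ F] {f : V × E n → F}
    (_ : ContDiffOn ℝ ∞ f Ω), ContDiffOn ℝ k (fun v => ∫ ξ, f (v, ξ) ∂(sphMeasure n)) O := by
  induction k with
  | zero =>
    intro F _ _ f hf
    exact contDiffOn_zero.mpr fun v hv =>
      (hasFDerivAt_integral_smooth hΩ hf hO hsub hv).continuousAt.continuousWithinAt
  | succ k ih =>
    intro F _ _ f hf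
    push_cast
    rw [contDiffOn_succ_iff_fderiv_of_isOpen hO]
    refine ⟨fun v hv => (hasFDerivAt_integral_smooth hΩ hf hO hsub
      hv).differentiableAt.differentiableWithinAt, by simp, ?_⟩
    exact (ih (fderivFst_contDiffOn hΩ hf)).congr fun v hv =>
      (hasFDerivAt_integral_smooth hΩ hf hO hsub hv).fderiv

lemma contDiffOn_integral_smooth {f : V × E n → F} {Ω : Set (V × E n)} (hΩ : IsOpen Ω)
    (hf : ContDiffOn ℝ ∞ f Ω) {O : Set V} (hO : IsOpen O) (hsub : O ×ˢ sphere (0 : E n) 1 ⊆ Ω) :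
    ContDiffOn ℝ ∞ (fun v => ∫ ξ, f (v, ξ) ∂(sphMeasure n)) O :=
  contDiffOn_infty.mpr fun k => contDiffOn_integral_aux hΩ hO hsub k hf

end measure

/-! ### Linear vector fields and the polar form of the Laplacian -/

section fields
variable {n : ℕ}

/-- The derivative of `f` along the linear vector field `x ↦ A x`. -/
def linDer (A : E n →L[ℝ] E n) (f : E n → ℝ) (x : E n) : ℝ := fderiv ℝ f x (A x)

/-- The `i`-th standard basis vector. -/
abbrev stdE (i : Fin n) : E n := EuclideanSpace.single i (1 : ℝ)

/-- The infinitesimal rotation `x ↦ x_i e_j - x_j e_i`. -/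
def rot (i j : Fin n) : E n →L[ℝ] E n :=
  (EuclideanSpace.proj i : E n →L[ℝ] ℝ).smulRight (stdE j)
    - (EuclideanSpace.proj j : E n →L[ℝ] ℝ).smulRight (stdE i)

lemma rot_apply (i j : Fin n) (x : E n) : rot i j x = x i • stdE j - x j • stdE i := rfl

/-- The spherical (angular) Laplacian `Σ_{i<j} (x_i ∂_j - x_j ∂_i)²`, written as half the sum over
all pairs. -/
def angLap (f : E n → ℝ) (x : E n) : ℝ :=
  (1 / 2) * ∑ i : Fin n, ∑ j : Fin n, linDer (rot i j) (linDer (rot i j) f) x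

lemma NOp_eq_linDer (f : E n → ℝ) : NOp n f = linDer (ContinuousLinearMap.id ℝ (E n)) f := rfl

lemma linDer_contDiffOn (A : E n →L[ℝ] E n) {f : E n → ℝ} {O : Set (E n)} (hO : IsOpen O)
    (hf : ContDiffOn ℝ ∞ f O) : ContDiffOn ℝ ∞ (linDer A f) O :=
  (hf.fderiv_of_isOpen hO (by simp)).clm_apply A.contDiff.contDiffOn

lemma linDer_contDiff (A : E n →L[ℝ] E n) {f : E n → ℝ} (hf : ContDiff ℝ ∞ f) :
    ContDiff ℝ ∞ (linDer A f) := by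
  rw [← contDiffOn_univ] at *
  exact linDer_contDiffOn A isOpen_univ hf

lemma angLap_contDiff {f : E n → ℝ} (hf : ContDiff ℝ ∞ f) : ContDiff ℝ ∞ (angLap f) :=
  contDiff_const.mul (ContDiff.sum fun _ _ => ContDiff.sum fun _ _ =>
    linDer_contDiff _ (linDer_contDiff _ hf))

lemma NOp_iter_contDiffOn {f : E n → ℝ} {O : Set (E n)} (hO : IsOpen O)
    (hf : ContDiffOn ℝ ∞ f O) (k : ℕ) : ContDiffOn ℝ ∞ ((NOp n)^[k] f) O := by
  induction k with
  | zero => exact hf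
  | succ k ih => rw [Function.iterate_succ_apply']; exact linDer_contDiffOn (ContinuousLinearMap.id ℝ (E n)) hO ih

lemma diffAt_of_open {F : Type} [NormedAddCommGroup F] [NormedSpace ℝ F] {f : E n → F}
    {O : Set (E n)} (hO : IsOpen O)
    (hf : ContDiffOn ℝ ∞ f O) {x : E n} (hx : x ∈ O) : DifferentiableAt ℝ f x :=
  (hf.contDiffAt (hO.mem_nhds hx)).differentiableAt (by simp)

lemma linDer_congr (A : E n →L[ℝ] E n) {f g : E n → ℝ} {O : Set (E n)} (hO : IsOpen O)
    (h : ∀ x ∈ O, f x = g x) {x : E n} (hx : x ∈ O) : linDer A f x = linDer A g x := by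
  unfold linDer
  rw [Filter.EventuallyEq.fderiv_eq]
  filter_upwards [hO.mem_nhds hx] with y hy using h y hy

lemma linDer_mul (A : E n →L[ℝ] E n) {f g : E n → ℝ} {x : E n} (hf : DifferentiableAt ℝ f x)
    (hg : DifferentiableAt ℝ g x) :
    linDer A (fun y => f y * g y) x = linDer A f x * g x + f x * linDer A g x := by
  unfold linDer
  rw [fderiv_fun_mul hf hg]
  simp; ring

lemma linDer_linDer (A B : E n →L[ℝ] E n) {f : E n → ℝ} {O : Set (E n)} (hO : IsOpen O)
    (hf : ContDiffOn ℝ ∞ f O) {x : E n} (hx : x ∈ O) :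
    linDer A (linDer B f) x = fderiv ℝ (fderiv ℝ f) x (A x) (B x) + fderiv ℝ f x (B (A x)) := by
  have h : HasFDerivAt (fderiv ℝ f) (fderiv ℝ (fderiv ℝ f) x) x :=
    (diffAt_of_open hO (hf.fderiv_of_isOpen hO (by simp)) hx).hasFDerivAt
  have h2 := h.clm_apply B.hasFDerivAt
  change fderiv ℝ (fun y => fderiv ℝ f y (B y)) x (A x) = _
  rw [h2.fderiv]
  simp [add_comm]

lemma snd_symm {f : E n → ℝ} {O : Set (E n)} (hO : IsOpen O)
    (hf : ContDiffOn ℝ ∞ f O) {x : E n} (hx : x ∈ O) (v w : E n) :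
    fderiv ℝ (fderiv ℝ f) x v w = fderiv ℝ (fderiv ℝ f) x w v :=
  ((hf.contDiffAt (hO.mem_nhds hx)).isSymmSndFDerivAt (by
    rw [minSmoothness_of_isRCLikeNormedField]; exact WithTop.coe_le_coe.mpr le_top)).eq v w

/-- `N` commutes with every derivation along a linear field. -/
lemma linDer_NOp_comm (A : E n →L[ℝ] E n) {f : E n → ℝ} {O : Set (E n)} (hO : IsOpen O)
    (hf : ContDiffOn ℝ ∞ f O) {x : E n} (hx : x ∈ O) :
    linDer A (NOp n f) x = NOp n (linDer A f) x := by
  rw [NOp_eq_linDer, NOp_eq_linDer, linDer_linDer _ _ hO hf hx, linDer_linDer _ _ hO hf hx,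
    snd_symm hO hf hx]
  simp

lemma sum_coord (x : E n) : ∑ i, x i • stdE i = x := by
  have := (EuclideanSpace.basisFun (Fin n) ℝ).sum_repr x
  simpa using this

lemma norm_sq_coord (x : E n) : ‖x‖ ^ 2 = ∑ i, x i ^ 2 := by
  rw [EuclideanSpace.norm_sq_eq]; simp

lemma stdE_apply (i j : Fin n) : (stdE i : E n) j = if j = i then 1 else 0 := by
  simp [stdE, PiLp.single_apply]

lemma rot_rot (i j : Fin n) (x : E n) :
    rot i j (rot i j x) = (if i = j then x i else 0) • stdE j - x j • stdE j - x i • stdE i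
      + (if i = j then x j else 0) • stdE i := by
  rw [rot_apply i j (rot i j x)]
  simp only [rot_apply, PiLp.sub_apply, PiLp.smul_apply, stdE_apply, smul_eq_mul]
  by_cases h : i = j
  · subst h; simp
  · simp only [h, if_false, if_true, Ne.symm (Ne.intro h)]
    module

/-- Polar decomposition of the Laplacian: `|x|² Δ = N² + (n-2) N + Δ_S`. -/
lemma angLap_eq {f : E n → ℝ} {O : Set (E n)} (hO : IsOpen O)
    (hf : ContDiffOn ℝ ∞ f O) {x : E n} (hx : x ∈ O) :
    angLap f x = ‖x‖ ^ 2 * lap n f x - NOp n (NOp n f) x - ((n : ℝ) - 2) * NOp n f x := by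
  set H := fderiv ℝ (fderiv ℝ f) x with hH
  set L := fderiv ℝ f x with hL
  have hsym : ∀ v w, H v w = H w v := snd_symm hO hf hx
  have h1 : ∀ v, fderiv ℝ (fun y => fderiv ℝ f y v) x v = H v v := by
    intro v
    have h : HasFDerivAt (fderiv ℝ f) H x :=
      (diffAt_of_open hO (hf.fderiv_of_isOpen hO (by simp)) hx).hasFDerivAt
    rw [(h.clm_apply (hasFDerivAt_const v x)).fderiv]; simp
  have hN : NOp n f x = L x := rfl
  have hNN : NOp n (NOp n f) x = H x x + L x := by
    rw [NOp_eq_linDer, NOp_eq_linDer, linDer_linDer _ _ hO hf hx]; simp [hH, hL]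
  have hLx : ∑ i, x i * L (stdE i) = L x := by
    conv_rhs => rw [← sum_coord x]
    simp
  have hHx : ∑ i, ∑ j, x i * x j * H (stdE i) (stdE j) = H x x := by
    conv_rhs => rw [← sum_coord x]
    simp [Finset.mul_sum, mul_assoc, fun i j => hsym (stdE j) (stdE i)]
  unfold lap angLap
  simp only [h1, linDer_linDer _ _ hO hf hx, ← hH, ← hL, hNN, hN]
  have e1 : ∀ i j : Fin n, H (rot i j x) (rot i j x) =
      x i ^ 2 * H (stdE j) (stdE j) + x j ^ 2 * H (stdE i) (stdE i)
        - 2 * (x i * x j * H (stdE i) (stdE j)) := by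
    intro i j
    rw [rot_apply]
    simp only [map_sub, map_smul, _root_.sub_apply, _root_.smul_apply,
      smul_eq_mul, hsym (stdE j) (stdE i)]
    ring
  have e2 : ∀ i j : Fin n, L (rot i j (rot i j x)) =
      (if i = j then x i else 0) * L (stdE j) - x j * L (stdE j) - x i * L (stdE i)
      + (if i = j then x j else 0) * L (stdE i) := by
    intro i j
    rw [rot_rot]
    simp only [map_sub, map_add, map_smul, smul_eq_mul]
  simp only [e1, e2, Finset.sum_add_distrib, Finset.sum_sub_distrib, ← Finset.mul_sum, hHx]
  simp only [ite_mul, zero_mul, Finset.sum_ite_eq, Finset.mem_univ, if_true, hLx,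
    Finset.sum_const, Finset.card_univ, Fintype.card_fin, nsmul_eq_mul, ← Finset.sum_mul,
    ← norm_sq_coord, ← Finset.mul_sum]
  have hnL : ∑ i, x i * ((n : ℝ) * L (stdE i)) = n * L x := by
    rw [← hLx, Finset.mul_sum]; exact Finset.sum_congr rfl fun i _ => by ring
  rw [hnL]
  ring
end fields

/-! ### Rotation invariance and integration by parts on the sphere -/

section ibp
variable {n : ℕ}

lemma hasDerivAt_integral_smooth {f : ℝ × E n → ℝ} {Ω : Set (ℝ × E n)} (hΩ : IsOpen Ω)
    (hf : ContDiffOn ℝ ∞ f Ω) {O : Set ℝ} (hO : IsOpen O) (hsub : O ×ˢ sphere (0 : E n) 1 ⊆ Ω)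
    {t : ℝ} (ht : t ∈ O) {f' : E n → ℝ}
    (hd : ∀ ξ ∈ sphere (0 : E n) 1, HasDerivAt (fun t => f (t, ξ)) (f' ξ) t) :
    HasDerivAt (fun t => ∫ ξ, f (t, ξ) ∂(sphMeasure n)) (∫ ξ, f' ξ ∂(sphMeasure n)) t := by
  have h := (hasFDerivAt_integral_smooth hΩ hf hO hsub ht).hasDerivAt
  have hint : Integrable (fun ξ => fderivFst f (t, ξ)) (sphMeasure n) :=
    integrable_sph ((fderivFst_contDiffOn hΩ hf).continuousOn.comp (f := fun ξ => (t, ξ))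
      (by fun_prop) fun ξ hξ => hsub ⟨ht, hξ⟩)
  rw [ContinuousLinearMap.integral_apply hint] at h
  have he : ∫ ξ, f' ξ ∂(sphMeasure n) = ∫ ξ, fderivFst f (t, ξ) 1 ∂(sphMeasure n) := ?_
  · rw [he]; exact h
  refine integral_sph_congr (F := ℝ) fun ξ hξ => ?_
  have h2 : HasFDerivAt (fun t => f (t, ξ)) (fderivFst f (t, ξ)) t :=
    hasFDerivAt_slice hΩ hf (hsub ⟨ht, hξ⟩)
  exact (hd ξ hξ).unique h2.hasDerivAt

/-- The orthogonal projection onto the plane spanned by `e_i` and `e_j` (for `i ≠ j`). -/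
def planeProj (i j : Fin n) : E n →L[ℝ] E n :=
  (EuclideanSpace.proj i : E n →L[ℝ] ℝ).smulRight (stdE i)
    + (EuclideanSpace.proj j : E n →L[ℝ] ℝ).smulRight (stdE j)

lemma planeProj_apply (i j : Fin n) (x : E n) :
    planeProj i j x = x i • stdE i + x j • stdE j := rfl

/-- Rotation by the angle `t` in the plane of `e_i` and `e_j`. -/
def rotMap (i j : Fin n) (t : ℝ) (x : E n) : E n :=
  x + (Real.cos t - 1) • planeProj i j x + Real.sin t • rot i j x

lemma rotMap_norm {i j : Fin n} (hij : i ≠ j) (t : ℝ) (x : E n) : ‖rotMap i j t x‖ = ‖x‖ := by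
  have hji : j ≠ i := hij.symm
  have h : ‖rotMap i j t x‖ ^ 2 = ‖x‖ ^ 2 := by
    rw [← real_inner_self_eq_norm_sq, ← real_inner_self_eq_norm_sq, rotMap, planeProj_apply,
      rot_apply]
    simp only [inner_add_left, inner_add_right, inner_sub_left, inner_sub_right, inner_smul_left,
      inner_smul_right, EuclideanSpace.inner_single_left, EuclideanSpace.inner_single_right,
      stdE_apply, hij, hji, if_true, if_false]
    simp
    have := Real.sin_sq_add_cos_sq t
    linear_combination ((x i) ^ 2 + (x j) ^ 2) * this
  exact (sq_eq_sq₀ (norm_nonneg _) (norm_nonneg _)).mp h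

/-- The rotation `rotMap` as a linear map. -/
def rotLin (i j : Fin n) (t : ℝ) : E n →L[ℝ] E n :=
  ContinuousLinearMap.id ℝ (E n) + (Real.cos t - 1) • planeProj i j + Real.sin t • rot i j

/-- The rotation `rotMap` as a linear isometric equivalence. -/
def rotEquiv {i j : Fin n} (hij : i ≠ j) (t : ℝ) : E n ≃ₗᵢ[ℝ] E n :=
  LinearIsometry.toLinearIsometryEquiv
    { toLinearMap := (rotLin i j t).toLinearMap
      norm_map' := fun x => rotMap_norm hij t x } rfl

lemma rotEquiv_apply {i j : Fin n} (hij : i ≠ j) (t : ℝ) (x : E n) :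
    rotEquiv hij t x = rotMap i j t x := rfl

lemma rotMap_hasDerivAt (i j : Fin n) (ξ : E n) :
    HasDerivAt (fun t => rotMap i j t ξ) (rot i j ξ) 0 := by
  have hc := (((Real.hasDerivAt_cos 0).sub_const 1).smul_const (planeProj i j ξ)).const_add ξ
  have hs := (Real.hasDerivAt_sin 0).smul_const (rot i j ξ)
  have h3 := hc.add hs
  have h4 : -Real.sin 0 • planeProj i j ξ + Real.cos 0 • rot i j ξ = rot i j ξ := by simp
  rw [h4] at h3
  exact h3

lemma rotMap_zero (i j : Fin n) (ξ : E n) : rotMap i j 0 ξ = ξ := by simp [rotMap]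

/-- Infinitesimal rotation invariance of the surface measure. -/
lemma integral_linDer_rot (i j : Fin n) {f : E n → ℝ} {O : Set (E n)} (hO : IsOpen O)
    (hf : ContDiffOn ℝ ∞ f O) (hsub : sphere (0 : E n) 1 ⊆ O) :
    ∫ ξ, linDer (rot i j) f ξ ∂(sphMeasure n) = 0 := by
  rcases eq_or_ne i j with rfl | hij
  · simp [linDer, rot_apply]
  have hsm : ContDiff ℝ ∞ (fun p : ℝ × E n => rotMap i j p.1 p.2) := by
    unfold rotMap
    have h1 := Real.contDiff_cos (n := ∞)
    have h2 := Real.contDiff_sin (n := ∞)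
    fun_prop
  have hΩ : IsOpen ((fun p : ℝ × E n => rotMap i j p.1 p.2) ⁻¹' O) := hO.preimage hsm.continuous
  have hF : ContDiffOn ℝ ∞ (fun p : ℝ × E n => f (rotMap i j p.1 p.2))
      ((fun p : ℝ × E n => rotMap i j p.1 p.2) ⁻¹' O) :=
    hf.comp hsm.contDiffOn fun _ h => h
  have hd := hasDerivAt_integral_smooth hΩ hF isOpen_univ (t := 0)
    (fun p hp => hsub (by simpa [rotMap_norm hij] using hp.2)) (mem_univ _)
    (f' := linDer (rot i j) f) (fun ξ hξ => by
      have h1 := rotMap_hasDerivAt i j ξ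
      have h2 : HasFDerivAt f (fderiv ℝ f ξ) (rotMap i j 0 ξ) := by
        rw [rotMap_zero]; exact (diffAt_of_open hO hf (hsub hξ)).hasFDerivAt
      exact h2.comp_hasDerivAt 0 h1)
  have hc : ∀ t : ℝ, ∫ ξ, f (rotMap i j t ξ) ∂(sphMeasure n) = ∫ ξ, f ξ ∂(sphMeasure n) := fun t =>
    (measurePreserving_sph (rotEquiv hij t)).integral_comp
      (rotEquiv hij t).toHomeomorph.measurableEmbedding f
  simp only [hc] at hd
  exact hd.unique (hasDerivAt_const _ _)

lemma integral_linDer_rot_mul (i j : Fin n) {f g : E n → ℝ} {O : Set (E n)} (hO : IsOpen O)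
    (hf : ContDiffOn ℝ ∞ f O) (hg : ContDiffOn ℝ ∞ g O) (hsub : sphere (0 : E n) 1 ⊆ O) :
    ∫ ξ, linDer (rot i j) f ξ * g ξ ∂(sphMeasure n)
      = - ∫ ξ, f ξ * linDer (rot i j) g ξ ∂(sphMeasure n) := by
  have h := integral_linDer_rot i j hO (hf.mul hg) hsub
  rw [integral_sph_congr (fun ξ hξ => linDer_mul (rot i j) (diffAt_of_open hO hf (hsub hξ))
    (diffAt_of_open hO hg (hsub hξ))), integral_add] at h
  · linarith
  · exact integrable_sph (((linDer_contDiffOn _ hO hf).mul hg).continuousOn.mono hsub)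
  · exact integrable_sph ((hf.mul (linDer_contDiffOn _ hO hg)).continuousOn.mono hsub)

/-- The angular Laplacian is symmetric on the sphere. -/
lemma integral_angLap_mul {f g : E n → ℝ} {O : Set (E n)} (hO : IsOpen O)
    (hf : ContDiffOn ℝ ∞ f O) (hg : ContDiffOn ℝ ∞ g O) (hsub : sphere (0 : E n) 1 ⊆ O) :
    ∫ ξ, angLap f ξ * g ξ ∂(sphMeasure n) = ∫ ξ, f ξ * angLap g ξ ∂(sphMeasure n) := by
  have h : ∀ i j : Fin n, ∫ ξ, linDer (rot i j) (linDer (rot i j) f) ξ * g ξ ∂(sphMeasure n)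
      = ∫ ξ, f ξ * linDer (rot i j) (linDer (rot i j) g) ξ ∂(sphMeasure n) := fun i j => by
    rw [integral_linDer_rot_mul i j hO (linDer_contDiffOn _ hO hf) hg hsub,
      integral_linDer_rot_mul i j hO hf (linDer_contDiffOn _ hO hg) hsub, neg_neg]
  have i1 : ∀ i j : Fin n, Integrable
      (fun ξ => linDer (rot i j) (linDer (rot i j) f) ξ * g ξ) (sphMeasure n) := fun i j =>
    integrable_sph (((linDer_contDiffOn _ hO (linDer_contDiffOn _ hO hf)).mul
      hg).continuousOn.mono hsub)
  have i2 : ∀ i j : Fin n, Integrable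
      (fun ξ => f ξ * linDer (rot i j) (linDer (rot i j) g) ξ) (sphMeasure n) := fun i j =>
    integrable_sph ((hf.mul (linDer_contDiffOn _ hO
      (linDer_contDiffOn _ hO hg))).continuousOn.mono hsub)
  have e1 : ∀ ξ, angLap f ξ * g ξ
      = (1 / 2) * ∑ i : Fin n, ∑ j : Fin n, linDer (rot i j) (linDer (rot i j) f) ξ * g ξ := by
    intro ξ
    simp only [angLap, mul_assoc, Finset.sum_mul]
  have e2 : ∀ ξ, f ξ * angLap g ξ
      = (1 / 2) * ∑ i : Fin n, ∑ j : Fin n, f ξ * linDer (rot i j) (linDer (rot i j) g) ξ := by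
    intro ξ
    unfold angLap
    rw [mul_left_comm, Finset.mul_sum]
    simp only [Finset.mul_sum]
  simp only [e1, e2]
  rw [integral_const_mul, integral_const_mul,
    integral_finsetSum _ fun i _ => integrable_finsetSum _ fun j _ => i1 i j,
    integral_finsetSum _ fun i _ => integrable_finsetSum _ fun j _ => i2 i j]
  congr 1
  refine Finset.sum_congr rfl fun i _ => ?_
  rw [integral_finsetSum _ fun j _ => i1 i j, integral_finsetSum _ fun j _ => i2 i j]
  exact Finset.sum_congr rfl fun j _ => h i j

end ibp

/-! ### Pairings of H-harmonic functions with test functions -/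

section pairing
variable {n : ℕ}

/-- Linear vector fields commute with dilations. -/
lemma linDer_dil (A : E n →L[ℝ] E n) (r : ℝ) {f : E n → ℝ} {x : E n}
    (hf : DifferentiableAt ℝ f (r • x)) :
    linDer A (fun y => f (r • y)) x = linDer A f (r • x) := by
  have h : HasFDerivAt (fun y : E n => r • y) (r • ContinuousLinearMap.id ℝ (E n)) x :=
    (hasFDerivAt_id x).const_smul r
  have h2 := HasFDerivAt.comp x hf.hasFDerivAt h
  unfold linDer
  rw [show (fun y => f (r • y)) = f ∘ (fun y => r • y) from rfl, h2.fderiv]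
  simp

lemma angLap_dil (r : ℝ) {f : E n → ℝ} {O : Set (E n)} (hO : IsOpen O)
    (hf : ContDiffOn ℝ ∞ f O) {x : E n} (hx : r • x ∈ O) :
    angLap (fun y => f (r • y)) x = angLap f (r • x) := by
  unfold angLap
  congr 1
  refine Finset.sum_congr rfl fun i _ => Finset.sum_congr rfl fun j _ => ?_
  have hO' : IsOpen ((fun y : E n => r • y) ⁻¹' O) := hO.preimage (continuous_const_smul r)
  rw [linDer_congr _ hO' (fun y hy => linDer_dil (rot i j) r (diffAt_of_open hO hf hy)) hx]
  exact linDer_dil _ _ (diffAt_of_open hO (linDer_contDiffOn _ hO hf) hx)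

/-- The pairing of `u` with a test function `Φ` over the sphere of radius `e^{-s}`. -/
def pair (u Φ : E n → ℝ) (s : ℝ) : ℝ := ∫ ξ, u (Real.exp (-s) • ξ) * Φ ξ ∂(sphMeasure n)

lemma exp_smul_mem {s : ℝ} (hs : 0 < s) {ξ : E n} (hξ : ξ ∈ sphere (0 : E n) 1) :
    Real.exp (-s) • ξ ∈ ball (0 : E n) 1 := by
  rw [mem_sphere_zero_iff_norm] at hξ
  rw [mem_ball_zero_iff, norm_smul, hξ, mul_one, Real.norm_eq_abs, abs_of_pos (Real.exp_pos _)]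
  simpa using hs

lemma contDiff_ray : ContDiff ℝ ∞ (fun p : ℝ × E n => Real.exp (-p.1) • p.2) := by
  have h := Real.contDiff_exp (n := ∞)
  fun_prop

/-- The open set of all `(s, ξ)` for which `e^{-s} ξ` lies in the unit ball. -/
def raySet (n : ℕ) : Set (ℝ × E n) := (fun p : ℝ × E n => Real.exp (-p.1) • p.2) ⁻¹' ball 0 1

lemma isOpen_raySet : IsOpen (raySet n) := isOpen_ball.preimage contDiff_ray.continuous

lemma raySet_sub : Ioi (0 : ℝ) ×ˢ sphere (0 : E n) 1 ⊆ raySet n :=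
  fun _ hp => exp_smul_mem hp.1 hp.2

lemma ray_contDiffOn {u Φ : E n → ℝ} (hu : ContDiffOn ℝ ∞ u (ball 0 1)) (hΦ : ContDiff ℝ ∞ Φ) :
    ContDiffOn ℝ ∞ (fun p : ℝ × E n => u (Real.exp (-p.1) • p.2) * Φ p.2) (raySet n) :=
  (hu.comp contDiff_ray.contDiffOn fun _ h => h).mul (hΦ.comp contDiff_snd).contDiffOn

lemma pair_contDiffOn {u Φ : E n → ℝ} (hu : ContDiffOn ℝ ∞ u (ball 0 1)) (hΦ : ContDiff ℝ ∞ Φ) :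
    ContDiffOn ℝ ∞ (pair u Φ) (Ioi 0) :=
  contDiffOn_integral_smooth isOpen_raySet (ray_contDiffOn hu hΦ) isOpen_Ioi raySet_sub

lemma pair_hasDerivAt {u Φ : E n → ℝ} (hu : ContDiffOn ℝ ∞ u (ball 0 1)) (hΦ : ContDiff ℝ ∞ Φ)
    {s : ℝ} (hs : 0 < s) : HasDerivAt (pair u Φ) (-pair (NOp n u) Φ s) s := by
  have h := hasDerivAt_integral_smooth isOpen_raySet (ray_contDiffOn hu hΦ) isOpen_Ioi raySet_sub
    hs (f' := fun ξ => -(NOp n u (Real.exp (-s) • ξ) * Φ ξ)) (fun ξ hξ => by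
      have h1 : HasDerivAt (fun t : ℝ => Real.exp (-t) • ξ) (-(Real.exp (-s) • ξ)) s := by
        have h3 := ((hasDerivAt_neg s).exp).smul_const ξ
        have h4 : (Real.exp (-s) * -1) • ξ = -(Real.exp (-s) • ξ) := by simp
        rw [h4] at h3
        exact h3
      have h2 := (diffAt_of_open isOpen_ball hu (exp_smul_mem hs hξ)).hasFDerivAt.comp_hasDerivAt
        s h1
      have h5 := h2.mul_const (Φ ξ)
      rw [map_neg, neg_mul] at h5
      exact h5)
  rw [integral_neg] at h
  exact h

/-- Each derivative in `s` of a pairing is, up to sign, a normal derivative of `u`. -/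
lemma iteratedDeriv_pair {u Φ : E n → ℝ} (hu : ContDiffOn ℝ ∞ u (ball 0 1))
    (hΦ : ContDiff ℝ ∞ Φ) (k : ℕ) {s : ℝ} (hs : 0 < s) :
    iteratedDeriv k (pair u Φ) s = (-1) ^ k * pair ((NOp n)^[k] u) Φ s := by
  induction k generalizing s with
  | zero => simp
  | succ k ih =>
    rw [iteratedDeriv_succ, Filter.EventuallyEq.deriv_eq (f := fun s =>
      (-1) ^ k * pair ((NOp n)^[k] u) Φ s), ((pair_hasDerivAt
        (NOp_iter_contDiffOn isOpen_ball hu k) hΦ hs).const_mul _).deriv,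
      Function.iterate_succ_apply']
    · ring
    · filter_upwards [Ioi_mem_nhds hs] with t ht using ih ht

/-- Polar form of the equation `Du = 0`. -/
lemma hharm_polar {u : E n → ℝ} (hu : ContDiffOn ℝ ∞ u (ball 0 1)) (hH : HHarmonic n u)
    {s : ℝ} (hs : 0 < s) {ξ : E n} (hξ : ξ ∈ sphere (0 : E n) 1) :
    NOp n (NOp n u) (Real.exp (-s) • ξ) =
      -(((n : ℝ) - 2) * (Real.cosh s / Real.sinh s)) * NOp n u (Real.exp (-s) • ξ)
        - angLap u (Real.exp (-s) • ξ) := by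
  have hx := exp_smul_mem hs hξ
  have hr : ‖Real.exp (-s) • ξ‖ = Real.exp (-s) := by
    rw [norm_smul, mem_sphere_zero_iff_norm.mp hξ, mul_one, Real.norm_eq_abs,
      abs_of_pos (Real.exp_pos _)]
  have h1 := hH _ hx
  have h2 := angLap_eq isOpen_ball hu hx
  rw [hr] at h1 h2
  have hr1 : Real.exp (-s) < 1 := by simpa using hs
  have hr0 := Real.exp_pos (-s)
  have hc : Real.cosh s / Real.sinh s = (1 + Real.exp (-s) ^ 2) / (1 - Real.exp (-s) ^ 2) := by
    have hsh : Real.sinh s ≠ 0 := (Real.sinh_pos_iff.mpr hs).ne'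
    have ha : 1 - Real.exp (-s) ^ 2 ≠ 0 := by nlinarith
    have he : Real.exp s * Real.exp (-s) = 1 := by rw [← Real.exp_add]; simp
    rw [div_eq_div_iff hsh ha, Real.cosh_eq, Real.sinh_eq]
    linear_combination (-Real.exp (-s)) * he
  rw [hc, h2]
  change _ + _ * NOp n u (Real.exp (-s) • ξ) = 0 at h1
  have ha : 1 - Real.exp (-s) ^ 2 ≠ 0 := by nlinarith
  generalize Real.exp (-s) = r at *
  have h3 : lap n u (r • ξ) = -2 * ((n : ℝ) - 2) * NOp n u (r • ξ) / (1 - r ^ 2) := by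
    rw [eq_div_iff ha]
    apply mul_left_cancel₀ ha
    linear_combination h1
  rw [h3]
  field_simp
  ring

lemma pair_angLap {u Φ : E n → ℝ} (hu : ContDiffOn ℝ ∞ u (ball 0 1)) (hΦ : ContDiff ℝ ∞ Φ)
    {s : ℝ} (hs : 0 < s) : pair (angLap u) Φ s = pair u (angLap Φ) s := by
  unfold pair
  have hc : Continuous fun y : E n => Real.exp (-s) • y := continuous_const_smul _
  have hO := isOpen_ball.preimage hc (t := ball (0 : E n) 1)
  have hd : ContDiffOn ℝ ∞ (fun y : E n => u (Real.exp (-s) • y))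
      ((fun y : E n => Real.exp (-s) • y) ⁻¹' ball (0 : E n) 1) :=
    hu.comp (contDiff_const_smul _).contDiffOn fun _ h => h
  rw [← integral_angLap_mul hO hd hΦ.contDiffOn fun ξ hξ => exp_smul_mem hs hξ]
  refine integral_sph_congr fun ξ hξ => ?_
  rw [angLap_dil _ isOpen_ball hu (exp_smul_mem hs hξ)]

/-- The pairings of an `H`-harmonic function satisfy a linear differential equation in `s`, with the
angular Laplacian moved to the test function. -/
lemma pair_ode {u Φ : E n → ℝ} (hu : ContDiffOn ℝ ∞ u (ball 0 1)) (hH : HHarmonic n u)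
    (hΦ : ContDiff ℝ ∞ Φ) {s : ℝ} (hs : 0 < s) :
    deriv (deriv (pair u Φ)) s =
      ((n : ℝ) - 2) * (Real.cosh s / Real.sinh s) * deriv (pair u Φ) s - pair u (angLap Φ) s := by
  have hN : ContDiffOn ℝ ∞ (NOp n u) (ball 0 1) := NOp_iter_contDiffOn isOpen_ball hu 1
  have hNN : ContDiffOn ℝ ∞ (NOp n (NOp n u)) (ball 0 1) := NOp_iter_contDiffOn isOpen_ball hu 2
  have hA : ContDiffOn ℝ ∞ (angLap u) (ball 0 1) :=
    contDiffOn_const.mul (ContDiffOn.sum fun _ _ => ContDiffOn.sum fun _ _ =>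
      linDer_contDiffOn _ isOpen_ball (linDer_contDiffOn _ isOpen_ball hu))
  have h1 : deriv (deriv (pair u Φ)) s = pair (NOp n (NOp n u)) Φ s := by
    have := iteratedDeriv_pair hu hΦ 2 hs
    rw [iteratedDeriv_succ, iteratedDeriv_one] at this
    rw [this]; simp
  rw [h1, (pair_hasDerivAt hu hΦ hs).deriv, ← pair_angLap hu hΦ hs]
  have hint : ∀ {v : E n → ℝ}, ContDiffOn ℝ ∞ v (ball 0 1) →
      Integrable (fun ξ => v (Real.exp (-s) • ξ) * Φ ξ) (sphMeasure n) := fun hv =>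
    integrable_sph ((ray_contDiffOn hv hΦ).continuousOn.comp (f := fun ξ => (s, ξ))
      (by fun_prop) fun ξ hξ => raySet_sub ⟨hs, hξ⟩)
  unfold pair
  rw [mul_neg, ← neg_mul, ← integral_const_mul, ← integral_sub ((hint hN).const_mul _) (hint hA)]
  refine integral_sph_congr fun ξ hξ => ?_
  rw [hharm_polar hu hH hs hξ]
  ring

lemma angLap_iter_contDiff {Φ : E n → ℝ} (hΦ : ContDiff ℝ ∞ Φ) (j : ℕ) :
    ContDiff ℝ ∞ (angLap^[j] Φ) := by
  induction j with
  | zero => exact hΦ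
  | succ j ih => rw [Function.iterate_succ_apply']; exact angLap_contDiff ih

/-- In even dimension, pairings of `H`-harmonic functions that grow at most polynomially in `1/s`
have all their derivatives bounded up to `s = 0`, uniformly in families. -/
lemma pair_bddDerivs {ι : Type} {q : ℕ} (hn : n = 2 * q + 2) {u : ι → E n → ℝ}
    (hu : ∀ i, ContDiffOn ℝ ∞ (u i) (ball 0 1)) (hH : ∀ i, HHarmonic n (u i))
    {Φ : E n → ℝ} (hΦ : ContDiff ℝ ∞ Φ) (K : ℕ)
    (hK : ∀ j, Growth K fun i => pair (u i) (angLap^[j] Φ))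
    (h1 : ∀ j, ∃ C, ∀ i, |pair (NOp n (u i)) (angLap^[j] Φ) 1| ≤ C) :
    BddDerivs fun i => pair (u i) Φ := by
  have hn' : (n : ℝ) = 2 * q + 2 := by rw [hn]; push_cast; ring
  refine ode_regularity q 0 (fun j i => pair (u i) (angLap^[j] Φ))
    (fun j i => pair_contDiffOn (hu i) (angLap_iter_contDiff hΦ j)) (fun j i s hs => ?_) K hK
    (fun j => ?_) 0
  · have h := pair_ode (hu i) (hH i) (angLap_iter_contDiff hΦ j) hs
    rw [h, Function.iterate_succ_apply', hn']
    ring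
  · obtain ⟨C, hC⟩ := h1 j
    refine ⟨C, fun i => ?_⟩
    rw [(pair_hasDerivAt (hu i) (angLap_iter_contDiff hΦ j) one_pos).deriv, abs_neg]
    exact hC i

end pairing

/-! ### Boundary distributions of normal derivatives -/

section boundary
variable {n : ℕ}

/-- A Lipschitz map into a complete space has a limit at each point of the closure. -/
lemma exists_limit_of_lipschitz {V W : Type} [PseudoMetricSpace V] [MetricSpace W]
    [CompleteSpace W] {f : V → W} {s : Set V} {C : ℝ≥0} (hf : LipschitzOnWith C f s) {x : V}
    (hx : x ∈ closure s) : ∃ y, Tendsto f (𝓝[s] x) (𝓝 y) := by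
  have : (𝓝[s] x).NeBot := mem_closure_iff_nhdsWithin_neBot.mp hx
  have hc : Cauchy (𝓝[s] x) := cauchy_nhds.mono nhdsWithin_le_nhds
  exact cauchy_map_iff_exists_tendsto.mp
    (hc.map_of_le hf.uniformContinuousOn (le_principal_iff.mpr self_mem_nhdsWithin))

lemma bdd_of_limit {g : ℝ → ℝ} (hg : ContinuousOn g (Ioi 0)) {L : ℝ}
    (hL : Tendsto g (𝓝[>] 0) (𝓝 L)) : ∃ C, ∀ s ∈ Ioc (0 : ℝ) 1, |g s| ≤ C := by
  have h1 : ∀ᶠ s in 𝓝[>] (0 : ℝ), |g s| < |L| + 1 :=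
    hL.abs.eventually_lt_const (by linarith)
  obtain ⟨δ, hδ, h2⟩ := mem_nhdsGT_iff_exists_Ioo_subset.mp h1
  obtain ⟨C, hC⟩ := (isCompact_Icc (a := δ) (b := 1)).exists_bound_of_continuousOn
    (hg.mono fun s hs => lt_of_lt_of_le hδ hs.1)
  refine ⟨max (|L| + 1) C, fun s hs => ?_⟩
  rcases lt_or_ge s δ with h | h
  · exact le_max_of_le_left (h2 ⟨hs.1, h⟩).le
  · exact le_max_of_le_right (hC s ⟨h, hs.2⟩)

lemma limit_of_deriv_bdd {g g' : ℝ → ℝ} (hg : ∀ s > 0, HasDerivAt g (g' s) s) {C : ℝ}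
    (hC : ∀ s ∈ Ioc (0 : ℝ) 1, |g' s| ≤ C) : ∃ L, Tendsto g (𝓝[>] 0) (𝓝 L) := by
  have hl : LipschitzOnWith C.toNNReal g (Ioo 0 1) :=
    (convex_Ioo 0 1).lipschitzOnWith_of_nnnorm_hasDerivWithin_le
      (fun s hs => (hg s hs.1).hasDerivWithinAt) fun s hs => by
        rw [← NNReal.coe_le_coe, coe_nnnorm]
        exact (hC s ⟨hs.1, hs.2.le⟩).trans (Real.le_coe_toNNReal C)
  obtain ⟨L, hL⟩ := exists_limit_of_lipschitz hl (x := 0)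
    (by rw [closure_Ioo zero_ne_one]; exact ⟨le_rfl, zero_le_one⟩)
  rw [nhdsWithin_Ioo_eq_nhdsGT one_pos] at hL
  exact ⟨L, hL⟩

lemma tendsto_exp_neg : Tendsto (fun s : ℝ => Real.exp (-s)) (𝓝[>] 0) (𝓝[<] 1) := by
  refine tendsto_nhdsWithin_iff.mpr ⟨?_, ?_⟩
  · have : Continuous fun s : ℝ => Real.exp (-s) := by fun_prop
    simpa using (this.tendsto 0).mono_left nhdsWithin_le_nhds
  · filter_upwards [self_mem_nhdsWithin] with s hs
    have hs : 0 < s := hs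
    simpa using hs

lemma tendsto_neg_log : Tendsto (fun r : ℝ => -Real.log r) (𝓝[<] 1) (𝓝[>] 0) := by
  refine tendsto_nhdsWithin_iff.mpr ⟨?_, ?_⟩
  · have := (Real.continuousAt_log one_ne_zero).tendsto.neg
    rw [Real.log_one, neg_zero] at this
    exact this.mono_left nhdsWithin_le_nhds
  · filter_upwards [Ioo_mem_nhdsLT one_pos] with r hr
    have := Real.log_neg hr.1 hr.2
    simpa using this

/-- Boundary distributions in the logarithmic radial variable `s = -log r`. -/
lemma hasBD_iff {u : E n → ℝ} : HasBoundaryDistribution n u ↔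
    ∀ Φ : E n → ℝ, ContDiff ℝ ∞ Φ → ∃ L, Tendsto (pair u Φ) (𝓝[>] 0) (𝓝 L) := by
  refine forall₂_congr fun Φ _ => exists_congr fun L => ⟨fun h => h.comp tendsto_exp_neg,
    fun h => (h.comp tendsto_neg_log).congr' ?_⟩
  filter_upwards [Ioo_mem_nhdsLT one_pos] with r hr
  simp only [Function.comp, pair, neg_neg, Real.exp_log hr.1]

/-- Normal derivatives of an `H`-harmonic function inherit boundary distributions. -/
lemma boundary_normal {q : ℕ} (hn : n = 2 * q + 2) {u : E n → ℝ}
    (hu : ContDiffOn ℝ ∞ u (ball 0 1)) (hH : HHarmonic n u) (hB : HasBoundaryDistribution n u)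
    (k : ℕ) : HasBoundaryDistribution n ((NOp n)^[k] u) := by
  rw [hasBD_iff] at hB ⊢
  intro Φ hΦ
  have hb : BddDerivs fun _ : Unit => pair u Φ := by
    refine pair_bddDerivs hn (fun _ => hu) (fun _ => hH) hΦ 0 (fun j => ?_)
      fun j => ⟨_, fun _ => le_rfl⟩
    obtain ⟨L, hL⟩ := hB _ (angLap_iter_contDiff hΦ j)
    obtain ⟨C, hC⟩ := bdd_of_limit (pair_contDiffOn hu (angLap_iter_contDiff hΦ j)).continuousOn hL
    exact growth_of_bdd ⟨C, fun _ => hC⟩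
  obtain ⟨C, hC⟩ := hb (k + 1)
  refine limit_of_deriv_bdd (fun s hs =>
    pair_hasDerivAt (NOp_iter_contDiffOn isOpen_ball hu k) hΦ hs) (C := C) fun s hs => ?_
  have := hC () s hs
  rw [iteratedDeriv_pair hu hΦ _ hs.1, abs_mul, abs_pow, abs_neg, abs_one, one_pow, one_mul,
    Function.iterate_succ_apply'] at this
  rwa [abs_neg]

end boundary

/-! ### The hyperbolic Poisson kernel -/

section kernel
variable {n : ℕ}

/-- First and second derivatives at `0` of a power of a quotient of two quadratic polynomials. -/
lemma ratio_derivs (l : ℕ) (A D α β w : ℝ) (hD : D ≠ 0) :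
    HasDerivAt (fun t : ℝ => ((A - 2 * t * α - t ^ 2 * w) / (D + 2 * t * β + t ^ 2 * w)) ^ (l + 2))
      ((l + 2) * (A / D) ^ (l + 1) * ((-2 * α * D - 2 * A * β) / D ^ 2)) 0 ∧
    deriv (deriv fun t : ℝ =>
      ((A - 2 * t * α - t ^ 2 * w) / (D + 2 * t * β + t ^ 2 * w)) ^ (l + 2)) 0 =
      (l + 2) * ((l + 1) * (A / D) ^ l * ((-2 * α * D - 2 * A * β) / D ^ 2) ^ 2
        + (A / D) ^ (l + 1) * (-2 * w / D + 8 * α * β / D ^ 2 - 2 * A * w / D ^ 2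
          + 8 * A * β ^ 2 / D ^ 3)) := by
  have ha : ∀ t : ℝ, HasDerivAt (fun t : ℝ => A - 2 * t * α - t ^ 2 * w)
      (-2 * α - 2 * t * w) t := fun t => by
    have := ((((hasDerivAt_id t).const_mul 2).mul_const α).const_sub A).sub
      (((hasDerivAt_id t).pow 2).mul_const w)
    refine this.congr_deriv ?_
    simp
  have hd : ∀ t : ℝ, HasDerivAt (fun t : ℝ => D + 2 * t * β + t ^ 2 * w)
      (2 * β + 2 * t * w) t := fun t => by
    have := ((((hasDerivAt_id t).const_mul 2).mul_const β).const_add D).add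
      (((hasDerivAt_id t).pow 2).mul_const w)
    refine this.congr_deriv ?_
    simp
  have ha' : ∀ t : ℝ, HasDerivAt (fun t : ℝ => -2 * α - 2 * t * w) (-2 * w) t := fun t => by
    have := (((hasDerivAt_id t).const_mul 2).mul_const w).const_sub (-2 * α)
    refine this.congr_deriv ?_
    simp
  have hd' : ∀ t : ℝ, HasDerivAt (fun t : ℝ => 2 * β + 2 * t * w) (2 * w) t := fun t => by
    have := (((hasDerivAt_id t).const_mul 2).mul_const w).const_add (2 * β)
    refine this.congr_deriv ?_
    simp
  set a := fun t : ℝ => A - 2 * t * α - t ^ 2 * w with hadef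
  set d := fun t : ℝ => D + 2 * t * β + t ^ 2 * w with hddef
  have a0 : a 0 = A := by simp [hadef]
  have d0 : d 0 = D := by simp [hddef]
  have h1 : ∀ t, d t ≠ 0 → HasDerivAt (fun t => a t / d t)
      (((-2 * α - 2 * t * w) * d t - a t * (2 * β + 2 * t * w)) / d t ^ 2) t :=
    fun t ht => (ha t).div (hd t) ht
  have h2 : ∀ t, d t ≠ 0 → HasDerivAt (fun t => (a t / d t) ^ (l + 2))
      ((l + 2) * (a t / d t) ^ (l + 1) *
        (((-2 * α - 2 * t * w) * d t - a t * (2 * β + 2 * t * w)) / d t ^ 2)) t := fun t ht => by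
    refine ((h1 t ht).pow (l + 2)).congr_deriv ?_
    push_cast
    rfl
  constructor
  · refine (h2 0 (by rw [d0]; exact hD)).congr_deriv ?_
    rw [a0, d0]; congr 2; ring
  · have hev : ∀ᶠ t in 𝓝 (0 : ℝ), d t ≠ 0 :=
      (hd 0).continuousAt.eventually_ne (by rw [d0]; exact hD)
    rw [Filter.EventuallyEq.deriv_eq (hev.mono fun t ht => (h2 t ht).deriv)]
    have hd0 : d 0 ≠ 0 := by rw [d0]; exact hD
    have h3 := (((h1 0 hd0).pow (l + 1)).const_mul ((l : ℝ) + 2)).mul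
      ((((ha' 0).mul (hd 0)).sub ((ha 0).mul (hd' 0))).div ((hd 0).pow 2) (pow_ne_zero 2 hd0))
    refine h3.deriv.trans ?_
    simp only [Pi.pow_apply, Pi.mul_apply, Pi.sub_apply, Pi.div_apply, a0, d0]
    push_cast
    simp only [mul_zero, zero_mul, sub_zero, add_zero, pow_one]
    field_simp
    ring

lemma Ph_line (l : ℕ) (hn : n = l + 3) (x ζ v : E n) (t : ℝ) :
    Ph n (x + t • v) ζ = (((1 - ‖x‖ ^ 2) - 2 * t * inner ℝ x v - t ^ 2 * ‖v‖ ^ 2) /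
      (‖x - ζ‖ ^ 2 + 2 * t * inner ℝ (x - ζ) v + t ^ 2 * ‖v‖ ^ 2)) ^ (l + 2) := by
  have e1 : n - 1 = l + 2 := by omega
  have e2 : x + t • v - ζ = (x - ζ) + t • v := by abel
  unfold Ph
  rw [e1, e2, norm_add_sq_real, norm_add_sq_real, inner_smul_right, inner_smul_right, norm_smul,
    mul_pow, Real.norm_eq_abs, sq_abs]
  congr 2 <;> ring

/-- The domain on which the Poisson kernel is smooth. -/
def kerSet (n : ℕ) : Set (E n × E n) := {p | ‖p.1‖ < ‖p.2‖}

lemma isOpen_kerSet : IsOpen (kerSet n) :=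
  isOpen_lt continuous_fst.norm continuous_snd.norm

lemma kerSet_sub : ball (0 : E n) 1 ×ˢ sphere (0 : E n) 1 ⊆ kerSet n := fun p hp => by
  have h1 := mem_ball_zero_iff.mp hp.1
  have h2 := mem_sphere_zero_iff_norm.mp hp.2
  change ‖p.1‖ < ‖p.2‖
  rwa [h2]

lemma Ph_contDiffOn : ContDiffOn ℝ ∞ (fun p : E n × E n => Ph n p.1 p.2) (kerSet n) := by
  unfold Ph
  refine ContDiffOn.pow (ContDiffOn.div ?_ ?_ fun p hp => ?_) _
  · exact (contDiff_const.sub ((contDiff_norm_sq ℝ).comp contDiff_fst)).contDiffOn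
  · exact ((contDiff_norm_sq ℝ).comp (contDiff_fst.sub contDiff_snd)).contDiffOn
  · refine pow_ne_zero 2 (norm_ne_zero_iff.mpr (sub_ne_zero.mpr fun h => ?_))
    change ‖p.1‖ < ‖p.2‖ at hp
    rw [h] at hp
    exact lt_irrefl _ hp

lemma Ph_contDiffOn_left {ζ : E n} (hζ : ζ ∈ sphere (0 : E n) 1) :
    ContDiffOn ℝ ∞ (fun x => Ph n x ζ) (ball 0 1) :=
  Ph_contDiffOn.comp (f := fun x : E n => (x, ζ)) (contDiff_prodMk_left ζ).contDiffOn
    fun _ hx => kerSet_sub ⟨hx, hζ⟩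

lemma fderiv_line {f : E n → ℝ} {x v : E n} (hf : DifferentiableAt ℝ f x) :
    HasDerivAt (fun t : ℝ => f (x + t • v)) (fderiv ℝ f x v) 0 := by
  have h1 : HasDerivAt (fun t : ℝ => x + t • v) v 0 := by
    have := ((hasDerivAt_id (0 : ℝ)).smul_const v).const_add x
    rw [one_smul] at this
    exact this
  have h2 : HasFDerivAt f (fderiv ℝ f x) (x + (0 : ℝ) • v) := by
    rw [zero_smul, add_zero]; exact hf.hasFDerivAt
  exact h2.comp_hasDerivAt 0 h1

lemma fderiv_line2 {f : E n → ℝ} {O : Set (E n)} (hO : IsOpen O) (hf : ContDiffOn ℝ ∞ f O)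
    {x : E n} (hx : x ∈ O) (v : E n) :
    fderiv ℝ (fun y => fderiv ℝ f y v) x v = deriv (deriv fun t : ℝ => f (x + t • v)) 0 := by
  have hd : ContDiffOn ℝ ∞ (fun y => fderiv ℝ f y v) O :=
    (hf.fderiv_of_isOpen hO (by simp)).clm_apply contDiffOn_const
  rw [← (fderiv_line (v := v) (diffAt_of_open hO hd hx)).deriv]
  have hc : Continuous fun t : ℝ => x + t • v := by fun_prop
  have hev : ∀ᶠ t in 𝓝 (0 : ℝ), x + t • v ∈ O :=
    (hO.preimage hc).mem_nhds (by simpa using hx)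
  refine Filter.EventuallyEq.deriv_eq (hev.mono fun t ht => ?_)
  have h := fderiv_line (v := v) (diffAt_of_open hO hf ht)
  have h2 : HasDerivAt (fun s : ℝ => f (x + s • v)) (fderiv ℝ f (x + t • v) v) t := by
    have h3 : HasDerivAt (fun s : ℝ => f (x + t • v + s • v)) (fderiv ℝ f (x + t • v) v) (t - t) := by
      rw [sub_self]; exact h
    have h4 := h3.comp_sub_const t t
    refine h4.congr_of_eventuallyEq (Filter.Eventually.of_forall fun s => ?_)
    change f _ = f _
    congr 1
    rw [add_assoc, ← add_smul]
    congr 2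
    ring
  exact h2.deriv.symm

/-- The hyperbolic Poisson kernel is `H`-harmonic. -/
lemma Ph_hharmonic (hn : 3 ≤ n) {ζ : E n} (hζ : ζ ∈ sphere (0 : E n) 1) :
    HHarmonic n fun x => Ph n x ζ := by
  obtain ⟨l, hl⟩ := Nat.exists_eq_add_of_le' hn
  intro x hx
  have hsm := Ph_contDiffOn_left hζ
  have hdne : ‖x - ζ‖ ^ 2 ≠ 0 := by
    refine pow_ne_zero 2 (norm_ne_zero_iff.mpr (sub_ne_zero.mpr fun h => ?_))
    have h1 := mem_ball_zero_iff.mp hx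
    rw [h, mem_sphere_zero_iff_norm.mp hζ] at h1
    exact lt_irrefl _ h1
  have hz : ‖ζ‖ ^ 2 = 1 := by rw [mem_sphere_zero_iff_norm.mp hζ, one_pow]
  have hxx : ∑ i, x i ^ 2 = 1 - (1 - ‖x‖ ^ 2) := by rw [← norm_sq_coord]; ring
  have hdd : ∑ i, (x i - ζ i) ^ 2 = ‖x - ζ‖ ^ 2 := by rw [norm_sq_coord]; rfl
  have hin : inner ℝ (x - ζ) x = (‖x - ζ‖ ^ 2 - (1 - ‖x‖ ^ 2)) / 2 := by
    have h := norm_sub_sq_real x ζ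
    rw [inner_sub_left, real_inner_self_eq_norm_sq, real_inner_comm]
    rw [hz] at h
    linarith
  have hxd : ∑ i, x i * (x i - ζ i) = (‖x - ζ‖ ^ 2 - (1 - ‖x‖ ^ 2)) / 2 := by
    rw [← hin, PiLp.inner_apply]; rfl
  have hN : Nder n (fun x => Ph n x ζ) x = (l + 2) * ((1 - ‖x‖ ^ 2) / ‖x - ζ‖ ^ 2) ^ (l + 1) *
      ((-2 * ‖x‖ ^ 2 * ‖x - ζ‖ ^ 2 - 2 * (1 - ‖x‖ ^ 2) *
        ((‖x - ζ‖ ^ 2 - (1 - ‖x‖ ^ 2)) / 2)) / (‖x - ζ‖ ^ 2) ^ 2) := by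
    have h := fderiv_line (v := x) (diffAt_of_open isOpen_ball hsm hx)
    simp only [Ph_line l hl] at h
    have h2 := h.unique (ratio_derivs l _ _ _ _ _ hdne).1
    rw [Nder, h2, real_inner_self_eq_norm_sq, hin]
  have hlap : ∀ i, fderiv ℝ (fun y => fderiv ℝ (fun x => Ph n x ζ) y (stdE i)) x (stdE i) =
      (l + 2) * ((l + 1) * ((1 - ‖x‖ ^ 2) / ‖x - ζ‖ ^ 2) ^ l *
        ((-2 * x i * ‖x - ζ‖ ^ 2 - 2 * (1 - ‖x‖ ^ 2) * (x i - ζ i)) / (‖x - ζ‖ ^ 2) ^ 2) ^ 2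
        + ((1 - ‖x‖ ^ 2) / ‖x - ζ‖ ^ 2) ^ (l + 1) * (-2 * 1 / ‖x - ζ‖ ^ 2
          + 8 * x i * (x i - ζ i) / (‖x - ζ‖ ^ 2) ^ 2 - 2 * (1 - ‖x‖ ^ 2) * 1 / (‖x - ζ‖ ^ 2) ^ 2
          + 8 * (1 - ‖x‖ ^ 2) * (x i - ζ i) ^ 2 / (‖x - ζ‖ ^ 2) ^ 3)) := by
    intro i
    have e1 : ∀ y : E n, inner ℝ y (stdE i) = y i := fun y => by
      simp [EuclideanSpace.inner_single_right]
    have e2 : ‖(stdE i : E n)‖ ^ 2 = 1 := by simp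
    rw [fderiv_line2 isOpen_ball hsm hx]
    simp only [Ph_line l hl]
    rw [(ratio_derivs l _ _ _ _ _ hdne).2, e1, e1, e2]
    rfl
  rw [hN, lap]
  have hcast : (n : ℝ) = l + 3 := by rw [hl]; push_cast; ring
  have hcard : ∑ _i : Fin n, (1 : ℝ) = l + 3 := by simp [hcast]
  simp only [hlap, hcast]
  have hxn : ‖x‖ ^ 2 = 1 - (1 - ‖x‖ ^ 2) := by ring
  generalize 1 - ‖x‖ ^ 2 = a at *
  generalize ‖x - ζ‖ ^ 2 = d at *
  rw [hxn]
  have hsum : ∑ i, ((l : ℝ) + 2) * ((l + 1) * (a / d) ^ l *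
        ((-2 * x i * d - 2 * a * (x i - ζ i)) / d ^ 2) ^ 2
        + (a / d) ^ (l + 1) * (-2 * 1 / d
          + 8 * x i * (x i - ζ i) / d ^ 2 - 2 * a * 1 / d ^ 2
          + 8 * a * (x i - ζ i) ^ 2 / d ^ 3)) =
      ((l : ℝ) + 2) * (a / d) ^ l * (
        4 * (l + 1) / d ^ 2 * ∑ i, x i ^ 2
        + (8 * (l + 1) * a / d ^ 3 + 8 * (a / d) / d ^ 2) * ∑ i, x i * (x i - ζ i)
        + (4 * (l + 1) * a ^ 2 / d ^ 4 + 8 * (a / d) * a / d ^ 3) * ∑ i, (x i - ζ i) ^ 2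
        + (a / d) * (-2 / d - 2 * a / d ^ 2) * ∑ _i : Fin n, (1 : ℝ)) := by
    simp only [Finset.mul_sum, ← Finset.sum_add_distrib]
    refine Finset.sum_congr rfl fun i _ => ?_
    rw [pow_succ (a / d) l]
    generalize (a / d) ^ l = g
    field_simp
    ring
  rw [hsum, hxx, hdd, hxd, hcard, pow_succ (a / d) l]
  generalize (a / d) ^ l = g
  field_simp
  ring

end kernel

/-! ### Radial and tangential derivatives of the Poisson integral -/

section poisson
variable {n : ℕ}

/-- The hyperbolic Poisson integral `P_h[φ]`. -/
def Uint (φ : E n → ℝ) (x : E n) : ℝ := ∫ ξ, Ph n x ξ * φ ξ ∂(sphMeasure n)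

lemma Uint_joint {φ : E n → ℝ} (hφ : ContDiff ℝ ∞ φ) :
    ContDiffOn ℝ ∞ (fun p : E n × E n => Ph n p.1 p.2 * φ p.2) (kerSet n) :=
  Ph_contDiffOn.mul (hφ.comp contDiff_snd).contDiffOn

lemma Uint_contDiffOn {φ : E n → ℝ} (hφ : ContDiff ℝ ∞ φ) :
    ContDiffOn ℝ ∞ (Uint φ) (ball 0 1) :=
  contDiffOn_integral_smooth isOpen_kerSet (Uint_joint hφ) isOpen_ball kerSet_sub

/-- The kernel is symmetric on spheres: `|rζ - ξ| = |rξ - ζ|` for unit vectors. -/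
lemma Ph_symm (r : ℝ) {ζ ξ : E n} (hζ : ζ ∈ sphere (0 : E n) 1) (hξ : ξ ∈ sphere (0 : E n) 1) :
    Ph n (r • ζ) ξ = Ph n (r • ξ) ζ := by
  rw [mem_sphere_zero_iff_norm] at hζ hξ
  unfold Ph
  rw [norm_sub_sq_real, norm_sub_sq_real, norm_smul, norm_smul, hζ, hξ, inner_smul_left,
    inner_smul_left, real_inner_comm]

/-- By symmetry of the kernel, a radial restriction of `P_h[φ]` is a pairing of the `H`-harmonic
function `P_h(·, ζ)` with `φ`. -/
lemma Uint_eq_pair (φ : E n → ℝ) (s : ℝ) {ζ : E n} (hζ : ζ ∈ sphere (0 : E n) 1) :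
    Uint φ (Real.exp (-s) • ζ) = pair (fun x => Ph n x ζ) φ s :=
  integral_sph_congr fun _ hξ => by rw [Ph_symm _ hζ hξ]

lemma ray_hasDerivAt {f : E n → ℝ} (hf : ContDiffOn ℝ ∞ f (ball 0 1)) {s : ℝ} (hs : 0 < s)
    {ζ : E n} (hζ : ζ ∈ sphere (0 : E n) 1) :
    HasDerivAt (fun t : ℝ => f (Real.exp (-t) • ζ)) (-NOp n f (Real.exp (-s) • ζ)) s := by
  have h1 : HasDerivAt (fun t : ℝ => Real.exp (-t) • ζ) (-(Real.exp (-s) • ζ)) s := by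
    have h3 := ((hasDerivAt_neg s).exp).smul_const ζ
    have h4 : (Real.exp (-s) * -1) • ζ = -(Real.exp (-s) • ζ) := by simp
    rw [h4] at h3
    exact h3
  have h2 := (diffAt_of_open isOpen_ball hf (exp_smul_mem hs hζ)).hasFDerivAt.comp_hasDerivAt s h1
  rw [map_neg] at h2
  exact h2

lemma iteratedDeriv_ray {f : E n → ℝ} (hf : ContDiffOn ℝ ∞ f (ball 0 1)) (k : ℕ) {s : ℝ}
    (hs : 0 < s) {ζ : E n} (hζ : ζ ∈ sphere (0 : E n) 1) :
    iteratedDeriv k (fun t : ℝ => f (Real.exp (-t) • ζ)) s =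
      (-1) ^ k * (NOp n)^[k] f (Real.exp (-s) • ζ) := by
  induction k generalizing s with
  | zero => simp
  | succ k ih =>
    rw [iteratedDeriv_succ, Filter.EventuallyEq.deriv_eq (f := fun s : ℝ =>
      (-1) ^ k * (NOp n)^[k] f (Real.exp (-s) • ζ)), ((ray_hasDerivAt
        (NOp_iter_contDiffOn isOpen_ball hf k) hs hζ).const_mul _).deriv,
      Function.iterate_succ_apply']
    · ring
    · filter_upwards [Ioi_mem_nhds hs] with t ht using ih ht

lemma one_sub_exp_neg {s : ℝ} (hs : s ∈ Ioc (0 : ℝ) 1) : s / 2 ≤ 1 - Real.exp (-s) := by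
  have h1 : 1 + s ≤ Real.exp s := by linarith [Real.add_one_le_exp s]
  have h2 : Real.exp (-s) ≤ (1 + s)⁻¹ := by
    rw [Real.exp_neg]; exact inv_anti₀ (by linarith [hs.1]) h1
  have h3 : (1 + s)⁻¹ ≤ 1 - s / 2 := by
    rw [inv_le_iff_one_le_mul₀ (by linarith [hs.1])]
    nlinarith [hs.1, hs.2]
  linarith

lemma Ph_le {s : ℝ} (hs : s ∈ Ioc (0 : ℝ) 1) {ξ ζ : E n} (hξ : ξ ∈ sphere (0 : E n) 1)
    (hζ : ζ ∈ sphere (0 : E n) 1) : |Ph n (Real.exp (-s) • ξ) ζ| ≤ (4 / s) ^ (n - 1) := by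
  have hr0 := Real.exp_pos (-s)
  have hr := one_sub_exp_neg hs
  have hs0 := hs.1
  rw [mem_sphere_zero_iff_norm] at hζ hξ
  have hn : ‖Real.exp (-s) • ξ‖ = Real.exp (-s) := by
    rw [norm_smul, hξ, mul_one, Real.norm_eq_abs, abs_of_pos hr0]
  have h1 : 1 - Real.exp (-s) ≤ ‖Real.exp (-s) • ξ - ζ‖ := by
    have := norm_sub_norm_le ζ (Real.exp (-s) • ξ)
    rwa [hζ, hn, norm_sub_rev] at this
  unfold Ph
  rw [hn, abs_pow]
  refine pow_le_pow_left₀ (abs_nonneg _) ?_ _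
  generalize Real.exp (-s) = r at *
  generalize ‖r • ξ - ζ‖ = m at *
  have hr1 : r < 1 := by linarith
  rw [abs_of_nonneg (div_nonneg (by nlinarith) (sq_nonneg _)),
    div_le_div_iff₀ (by nlinarith) hs0]
  have h3 : (1 - r) ^ 2 ≤ m ^ 2 := by nlinarith
  nlinarith [mul_nonneg hr0.le hs0.le]

/-- The pairings of the kernel grow at most like `s^{-(n-1)}`, uniformly in the pole. -/
lemma growth_Ph {Ψ : E n → ℝ} (hΨ : Continuous Ψ) :
    Growth (n - 1) fun ζ : sphere (0 : E n) 1 => pair (fun x => Ph n x ζ) Ψ := by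
  obtain ⟨B, hB⟩ := (isCompact_sphere (0 : E n) 1).exists_bound_of_continuousOn hΨ.continuousOn
  refine ⟨4 ^ (n - 1) * |B| * (sphMeasure n).real univ, fun ζ s hs => ?_⟩
  have h1 : ∀ ξ ∈ sphere (0 : E n) 1, ‖Ph n (Real.exp (-s) • ξ) ζ * Ψ ξ‖ ≤ (4 / s) ^ (n - 1) * |B| :=
    fun ξ hξ => by
      rw [norm_mul]
      exact mul_le_mul (Ph_le hs hξ ζ.2) ((hB ξ hξ).trans (le_abs_self B)) (norm_nonneg _)
        (by have := hs.1; positivity)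
  have h2 := norm_integral_sph_le h1
  have h3 : (s ^ (n - 1))⁻¹ ≤ s ^ (-(((n - 1 : ℕ) : ℝ) + 1 / 2)) := by
    rw [← Real.rpow_natCast, ← Real.rpow_neg hs.1.le]
    exact Real.rpow_le_rpow_of_exponent_ge hs.1 hs.2 (by linarith)
  refine (h2.trans_eq ?_).trans (mul_le_mul_of_nonneg_left h3 (by positivity))
  rw [div_pow]
  ring

/-- The normal derivatives of a hyperbolic Poisson integral are bounded. -/
lemma NOp_Uint_bdd {q : ℕ} (hn : n = 2 * q + 2) (hn3 : 3 ≤ n) {φ : E n → ℝ}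
    (hφ : ContDiff ℝ ∞ φ) (k : ℕ) : ∃ C, ∀ x ∈ ball (0 : E n) 1, |(NOp n)^[k] (Uint φ) x| ≤ C := by
  have hb : BddDerivs fun ζ : sphere (0 : E n) 1 => pair (fun x => Ph n x ζ) φ := by
    refine pair_bddDerivs hn (fun ζ => Ph_contDiffOn_left ζ.2) (fun ζ => Ph_hharmonic hn3 ζ.2) hφ
      (n - 1) (fun j => growth_Ph (angLap_iter_contDiff hφ j).continuous) fun j => ?_
    have hΨ := angLap_iter_contDiff hφ j
    have hc : ContinuousOn (fun ζ : E n => NOp n (Uint (angLap^[j] φ)) (Real.exp (-1) • ζ))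
        (sphere 0 1) :=
      (NOp_iter_contDiffOn isOpen_ball (Uint_contDiffOn hΨ) 1).continuousOn.comp
        (continuous_const_smul _).continuousOn fun ζ hζ => exp_smul_mem one_pos hζ
    obtain ⟨C, hC⟩ := (isCompact_sphere (0 : E n) 1).exists_bound_of_continuousOn hc
    refine ⟨C, fun ζ => ?_⟩
    have h1 := pair_hasDerivAt (Ph_contDiffOn_left ζ.2) hΨ one_pos
    have h2 := ray_hasDerivAt (Uint_contDiffOn hΨ) one_pos ζ.2
    have h3 : (fun t : ℝ => Uint (angLap^[j] φ) (Real.exp (-t) • (ζ : E n))) =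
        pair (fun x => Ph n x ζ) (angLap^[j] φ) := funext fun t => Uint_eq_pair _ t ζ.2
    rw [h3] at h2
    rw [neg_injective (h1.unique h2)]
    exact hC ζ ζ.2
  obtain ⟨C, hC⟩ := hb k
  have hsm := NOp_iter_contDiffOn isOpen_ball (Uint_contDiffOn hφ) k
  have he1 : Real.exp (-1) < 1 := by simp
  obtain ⟨C', hC'⟩ := (isCompact_closedBall (0 : E n) (Real.exp (-1))).exists_bound_of_continuousOn
    (hsm.continuousOn.mono (closedBall_subset_ball he1))
  refine ⟨max C C', fun x hx => ?_⟩
  rcases le_or_gt ‖x‖ (Real.exp (-1)) with h | h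
  · exact le_max_of_le_right (hC' x (mem_closedBall_zero_iff.mpr h))
  · have hx0 : 0 < ‖x‖ := (Real.exp_pos _).trans h
    have hx1 := mem_ball_zero_iff.mp hx
    set s := -Real.log ‖x‖ with hsdef
    have hs : s ∈ Ioc (0 : ℝ) 1 := by
      refine ⟨by have := Real.log_neg hx0 hx1; linarith, ?_⟩
      have := (Real.lt_log_iff_exp_lt hx0).mpr h
      linarith
    have hζ : ‖x‖⁻¹ • x ∈ sphere (0 : E n) 1 := by
      rw [mem_sphere_zero_iff_norm, norm_smul, norm_inv, norm_norm, inv_mul_cancel₀ hx0.ne']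
    have hxe : Real.exp (-s) • (‖x‖⁻¹ • x) = x := by
      rw [hsdef, neg_neg, Real.exp_log hx0, smul_smul, mul_inv_cancel₀ hx0.ne', one_smul]
    have h4 := hC ⟨_, hζ⟩ s hs
    have h3 : (fun t : ℝ => Uint φ (Real.exp (-t) • (‖x‖⁻¹ • x))) =
        pair (fun y => Ph n y (‖x‖⁻¹ • x)) φ := funext fun t => Uint_eq_pair _ t hζ
    have h5 := iteratedDeriv_ray (Uint_contDiffOn hφ) k hs.1 hζ
    rw [h3, hxe] at h5
    refine le_max_of_le_left ?_
    change |iteratedDeriv k (pair (fun y => Ph n y (‖x‖⁻¹ • x)) φ) s| ≤ C at h4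
    rwa [h5, abs_mul, abs_pow, abs_neg, abs_one, one_pow, one_mul] at h4

/-- Rotation invariance of the kernel, in infinitesimal form. -/
lemma Ph_rot (i j : Fin n) {x ξ : E n} (h : (x, ξ) ∈ kerSet n) :
    fderiv ℝ (fun p : E n × E n => Ph n p.1 p.2) (x, ξ) (rot i j x, rot i j ξ) = 0 := by
  rcases eq_or_ne i j with rfl | hij
  · have h0 : ∀ y : E n, rot i i y = 0 := fun y => by simp [rot_apply]
    rw [h0, h0]
    exact map_zero _
  have hd : HasFDerivAt (fun p : E n × E n => Ph n p.1 p.2)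
      (fderiv ℝ (fun p : E n × E n => Ph n p.1 p.2) (x, ξ)) (rotMap i j 0 x, rotMap i j 0 ξ) := by
    rw [rotMap_zero, rotMap_zero]
    exact ((Ph_contDiffOn.contDiffAt (isOpen_kerSet.mem_nhds h)).differentiableAt
      (by simp)).hasFDerivAt
  have h1 := hd.comp_hasDerivAt (0 : ℝ) ((rotMap_hasDerivAt i j x).prodMk
    (rotMap_hasDerivAt i j ξ))
  have h2 : ((fun p : E n × E n => Ph n p.1 p.2) ∘ fun t => (rotMap i j t x, rotMap i j t ξ)) =
      fun _ => Ph n x ξ := by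
    funext t
    have e : ∀ y, rotMap i j t y = rotEquiv hij t y := fun y => rfl
    simp only [Function.comp, Ph, e, ← map_sub, LinearIsometryEquiv.norm_map]
  rw [h2] at h1
  exact h1.unique (hasDerivAt_const _ _)

lemma partial_snd {g : E n × E n → ℝ} {x ξ : E n} (hg : DifferentiableAt ℝ g (x, ξ)) (w : E n) :
    fderiv ℝ (fun η => g (x, η)) ξ w = fderiv ℝ g (x, ξ) (0, w) := by
  have h : HasFDerivAt (fun η => g (x, η))
      ((fderiv ℝ g (x, ξ)).comp (ContinuousLinearMap.inr ℝ (E n) (E n))) ξ :=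
    hg.hasFDerivAt.comp ξ (hasFDerivAt_prodMk_right x ξ)
  rw [h.fderiv]
  rfl

lemma partial_fst_mul {g : E n × E n → ℝ} {φ : E n → ℝ} {x ξ : E n}
    (hg : DifferentiableAt ℝ g (x, ξ)) (hφ : DifferentiableAt ℝ φ ξ) (v : E n) :
    fderivFst (fun p : E n × E n => g p * φ p.2) (x, ξ) v
      = fderiv ℝ g (x, ξ) (v, 0) * φ ξ := by
  have h1 : HasFDerivAt (fun p : E n × E n => φ p.2)
      ((fderiv ℝ φ ξ).comp (ContinuousLinearMap.snd ℝ (E n) (E n))) (x, ξ) :=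
    HasFDerivAt.comp (x, ξ) (g := φ) hφ.hasFDerivAt hasFDerivAt_snd
  have h2 : HasFDerivAt (fun p : E n × E n => g p * φ p.2) _ (x, ξ) := hg.hasFDerivAt.mul h1
  rw [fderivFst, h2.fderiv]
  simp [mul_comm]

lemma linDer_integral (A : E n →L[ℝ] E n) {f : E n × E n → ℝ} {Ω : Set (E n × E n)}
    (hΩ : IsOpen Ω) (hf : ContDiffOn ℝ ∞ f Ω) {O : Set (E n)} (hO : IsOpen O)
    (hsub : O ×ˢ sphere (0 : E n) 1 ⊆ Ω) {x : E n} (hx : x ∈ O) :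
    linDer A (fun x => ∫ ξ, f (x, ξ) ∂(sphMeasure n)) x
      = ∫ ξ, fderivFst f (x, ξ) (A x) ∂(sphMeasure n) := by
  have hint : Integrable (fun ξ => fderivFst f (x, ξ)) (sphMeasure n) :=
    integrable_sph ((fderivFst_contDiffOn hΩ hf).continuousOn.comp
      (f := fun ξ => (x, ξ)) (by fun_prop) fun ξ hξ => hsub ⟨hx, hξ⟩)
  rw [linDer, (hasFDerivAt_integral_smooth hΩ hf hO hsub hx).fderiv,
    ContinuousLinearMap.integral_apply hint]

/-- Rotational derivatives commute with the hyperbolic Poisson integral. -/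
lemma linDer_rot_Uint (i j : Fin n) {φ : E n → ℝ} (hφ : ContDiff ℝ ∞ φ) {x : E n}
    (hx : x ∈ ball (0 : E n) 1) :
    linDer (rot i j) (Uint φ) x = Uint (linDer (rot i j) φ) x := by
  have hO : IsOpen {ξ : E n | ‖x‖ < ‖ξ‖} := isOpen_lt continuous_const continuous_norm
  have hsub : sphere (0 : E n) 1 ⊆ {ξ : E n | ‖x‖ < ‖ξ‖} := fun ξ hξ => by
    change ‖x‖ < ‖ξ‖
    rw [mem_sphere_zero_iff_norm.mp hξ]
    exact mem_ball_zero_iff.mp hx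
  have hP : ContDiffOn ℝ ∞ (fun ξ => Ph n x ξ) {ξ : E n | ‖x‖ < ‖ξ‖} :=
    Ph_contDiffOn.comp (f := fun ξ : E n => (x, ξ)) (contDiff_prodMk_right x).contDiffOn
      fun _ h => h
  have h1 := integral_linDer_rot_mul i j hO hP hφ.contDiffOn hsub
  have h2 := linDer_integral (rot i j) isOpen_kerSet (Uint_joint hφ) isOpen_ball kerSet_sub hx
  have h3 : ∫ ξ, fderivFst (fun p : E n × E n => Ph n p.1 p.2 * φ p.2) (x, ξ) (rot i j x)
      ∂(sphMeasure n) = ∫ ξ, -(linDer (rot i j) (fun ξ => Ph n x ξ) ξ * φ ξ) ∂(sphMeasure n) := by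
    refine integral_sph_congr fun ξ hξ => ?_
    have hk : (x, ξ) ∈ kerSet n := hsub hξ
    have hPd : DifferentiableAt ℝ (fun p : E n × E n => Ph n p.1 p.2) (x, ξ) :=
      (Ph_contDiffOn.contDiffAt (isOpen_kerSet.mem_nhds hk)).differentiableAt (by simp)
    have h5 := partial_fst_mul hPd (hφ.differentiable (by simp) ξ) (rot i j x)
    have h4 := partial_snd hPd (rot i j ξ)
    have h6 := Ph_rot i j hk
    have h7 : (rot i j x, rot i j ξ) = (rot i j x, (0 : E n)) + ((0 : E n), rot i j ξ) := by simp
    rw [h7, map_add] at h6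
    rw [h5, linDer, h4]
    linear_combination φ ξ * h6
  rw [integral_neg, h1, neg_neg] at h3
  exact h2.trans h3

lemma NOp_iter_congr {f g : E n → ℝ} {O : Set (E n)} (hO : IsOpen O) (h : ∀ x ∈ O, f x = g x)
    (k : ℕ) : ∀ x ∈ O, (NOp n)^[k] f x = (NOp n)^[k] g x := by
  induction k with
  | zero => exact h
  | succ k ih =>
    intro x hx
    rw [Function.iterate_succ_apply', Function.iterate_succ_apply']
    exact linDer_congr (ContinuousLinearMap.id ℝ (E n)) hO ih hx

lemma linDer_NOp_iter_comm (A : E n →L[ℝ] E n) {f : E n → ℝ} {O : Set (E n)} (hO : IsOpen O)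
    (hf : ContDiffOn ℝ ∞ f O) (k : ℕ) :
    ∀ x ∈ O, linDer A ((NOp n)^[k] f) x = (NOp n)^[k] (linDer A f) x := by
  induction k with
  | zero => exact fun _ _ => rfl
  | succ k ih =>
    intro x hx
    rw [Function.iterate_succ_apply', Function.iterate_succ_apply',
      linDer_NOp_comm A hO (NOp_iter_contDiffOn hO hf k) hx]
    exact linDer_congr (ContinuousLinearMap.id ℝ (E n)) hO ih hx

/-- Tangential derivatives of `N^k P_h[φ]` are again of the form `N^k P_h[ψ]`. -/
lemma linDer_rot_NOp_Uint (i j : Fin n) {φ : E n → ℝ} (hφ : ContDiff ℝ ∞ φ) (k : ℕ) {x : E n}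
    (hx : x ∈ ball (0 : E n) 1) :
    linDer (rot i j) ((NOp n)^[k] (Uint φ)) x = (NOp n)^[k] (Uint (linDer (rot i j) φ)) x := by
  rw [linDer_NOp_iter_comm _ isOpen_ball (Uint_contDiffOn hφ) k x hx]
  exact NOp_iter_congr isOpen_ball (fun y hy => linDer_rot_Uint i j hφ hy) k x hx

end poisson

/-! ### Boundedness of all derivatives of the Poisson integral -/

section derivBounds
variable {n : ℕ} {F : Type} [NormedAddCommGroup F] [NormedSpace ℝ F]

/-- `f` is smooth on `T` and its derivatives up to order `p` are bounded there. -/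
def BddUpTo (T : Set (E n)) (p : ℕ) (f : E n → F) : Prop :=
  ContDiffOn ℝ ∞ f T ∧ ∀ m ≤ p, ∃ C, ∀ x ∈ T, ‖iteratedFDeriv ℝ m f x‖ ≤ C

lemma BddUpTo.congr {T : Set (E n)} {p : ℕ} {f g : E n → F} (hT : IsOpen T)
    (hf : BddUpTo T p f) (h : ∀ x ∈ T, g x = f x) : BddUpTo T p g := by
  refine ⟨hf.1.congr h, fun m hm => ?_⟩
  obtain ⟨C, hC⟩ := hf.2 m hm
  refine ⟨C, fun x hx => ?_⟩
  have : g =ᶠ[𝓝 x] f := by filter_upwards [hT.mem_nhds hx] with y hy using h y hy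
  rw [(this.iteratedFDeriv ℝ m).eq_of_nhds]
  exact hC x hx

lemma BddUpTo.add {T : Set (E n)} {p : ℕ} {f g : E n → F} (hT : IsOpen T)
    (hf : BddUpTo T p f) (hg : BddUpTo T p g) : BddUpTo T p (fun x => f x + g x) := by
  refine ⟨hf.1.add hg.1, fun m hm => ?_⟩
  obtain ⟨C, hC⟩ := hf.2 m hm
  obtain ⟨D, hD⟩ := hg.2 m hm
  refine ⟨C + D, fun x hx => ?_⟩
  rw [fun_iteratedFDeriv_add_apply (((hf.1.contDiffAt (hT.mem_nhds hx)).of_le (by exact_mod_cast le_top)))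
    (((hg.1.contDiffAt (hT.mem_nhds hx)).of_le (by exact_mod_cast le_top)))]
  exact (norm_add_le _ _).trans (add_le_add (hC x hx) (hD x hx))

lemma BddUpTo.sum {ι : Type} {T : Set (E n)} {p : ℕ} (hT : IsOpen T) (s : Finset ι)
    {f : ι → E n → F} (hf : ∀ i, BddUpTo T p (f i)) : BddUpTo T p (fun x => ∑ i ∈ s, f i x) := by
  classical
  induction s using Finset.induction_on with
  | empty =>
    refine ⟨by simpa using contDiffOn_const, fun m _ => ⟨0, fun x _ => ?_⟩⟩
    simp
  | insert a s ha ih =>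
    simp only [Finset.sum_insert ha]
    exact (hf a).add hT ih

lemma BddUpTo.smul {T : Set (E n)} {p : ℕ} {f : E n → ℝ} {g : E n → F} (hT : IsOpen T)
    (hf : BddUpTo T p f) (hg : BddUpTo T p g) : BddUpTo T p (fun x => f x • g x) := by
  refine ⟨hf.1.smul hg.1, fun m hm => ?_⟩
  choose! C hC using hf.2
  choose! D hD using hg.2
  refine ⟨∑ i ∈ Finset.range (m + 1), (m.choose i : ℝ) * C i * D (m - i), fun x hx => ?_⟩
  rw [← iteratedFDerivWithin_of_isOpen m hT hx]
  refine (norm_iteratedFDerivWithin_smul_le hf.1 hg.1 hT.uniqueDiffOn hx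
    (by exact_mod_cast le_top)).trans (Finset.sum_le_sum fun i hi => ?_)
  have hi' : i ≤ m := Nat.lt_succ_iff.mp (Finset.mem_range.mp hi)
  rw [iteratedFDerivWithin_of_isOpen i hT hx, iteratedFDerivWithin_of_isOpen (m - i) hT hx]
  have h1 := hC i (hi'.trans hm) x hx
  have h2 := hD (m - i) ((Nat.sub_le _ _).trans hm) x hx
  have h3 : 0 ≤ C i := (norm_nonneg _).trans h1
  gcongr

/-- A function smooth near a compact set containing `T` has bounded derivatives on `T`. -/
lemma BddUpTo.of_compact {T K O : Set (E n)} (hK : IsCompact K) (hO : IsOpen O) (hTK : T ⊆ K)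
    (hKO : K ⊆ O) {g : E n → F} (hg : ContDiffOn ℝ ∞ g O) (p : ℕ) : BddUpTo T p g := by
  refine ⟨hg.mono (hTK.trans hKO), fun m _ => ?_⟩
  have h : ContinuousOn (fun x => iteratedFDeriv ℝ m g x) K := by
    intro x hx
    have hx' := hKO hx
    refine (ContinuousAt.continuousWithinAt ?_)
    have := (hg.contDiffAt (hO.mem_nhds hx')).iteratedFDeriv_right (i := m) (m := 0)
      (by simp only [zero_add]; exact_mod_cast le_top)
    exact this.continuousAt
  obtain ⟨C, hC⟩ := hK.exists_bound_of_continuousOn h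
  exact ⟨C, fun x hx => hC x (hTK hx)⟩

/-- Polar decomposition of the gradient away from the origin. -/
lemma fderiv_polar (f : E n → ℝ) {x : E n} (hx : x ≠ 0) :
    fderiv ℝ f x = NOp n f x • ((‖x‖ ^ 2)⁻¹ • innerSL ℝ x) + ∑ i, ∑ j,
      linDer (rot i j) f x • ((‖x‖ ^ 2)⁻¹ • x i • (EuclideanSpace.proj j : E n →L[ℝ] ℝ)) := by
  have hx2 : ‖x‖ ^ 2 ≠ 0 := by positivity
  ext v
  have key : ∑ i, ∑ j, (x i * v j) • rot i j x = ‖x‖ ^ 2 • v - inner ℝ x v • x := by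
    have h1 : ∀ i, ∑ j, (x i * v j) • rot i j x = x i ^ 2 • v - (inner ℝ x v * x i) • stdE i := by
      intro i
      have e1 : ∑ j, (x i * v j) • rot i j x
          = ∑ j, (x i ^ 2 • (v j • stdE j) - (v j * x j) • (x i • stdE i)) :=
        Finset.sum_congr rfl fun j _ => by rw [rot_apply]; module
      have e2 : inner ℝ x v = ∑ j, v j * x j := by
        simp [PiLp.inner_apply]
      rw [e1, Finset.sum_sub_distrib, ← Finset.smul_sum, sum_coord, ← Finset.sum_smul, e2,
        smul_smul]
    simp_rw [h1]
    rw [Finset.sum_sub_distrib, ← Finset.sum_smul, ← norm_sq_coord]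
    simp_rw [← smul_smul]
    rw [← Finset.smul_sum, sum_coord]
  have h2 := congrArg (fderiv ℝ f x) key
  simp only [map_sum, map_smul, map_sub, smul_eq_mul] at h2
  have hproj : ∀ j, (EuclideanSpace.proj j : E n →L[ℝ] ℝ) v = v j := fun _ => rfl
  simp only [add_apply, _root_.smul_apply, smul_eq_mul, _root_.sum_apply,
    innerSL_apply_apply, hproj, linDer, NOp]
  have h3 : ∑ i, ∑ j, fderiv ℝ f x (rot i j x) * ((‖x‖ ^ 2)⁻¹ * (x i * v j))
      = (‖x‖ ^ 2)⁻¹ * ∑ i, ∑ j, x i * v j * fderiv ℝ f x (rot i j x) := by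
    simp only [Finset.mul_sum]
    exact Finset.sum_congr rfl fun i _ => Finset.sum_congr rfl fun j _ => by ring
  rw [h3, h2]
  field_simp
  ring

/-- The open annulus `1/2 < |x| < 1`. -/
def annulus (n : ℕ) : Set (E n) := {x | 1 / 2 < ‖x‖ ∧ ‖x‖ < 1}

lemma isOpen_annulus : IsOpen (annulus n) :=
  (isOpen_lt continuous_const continuous_norm).inter (isOpen_lt continuous_norm continuous_const)

lemma annulus_coeff {g : E n → F} (hg : ContDiffOn ℝ ∞ g {x | x ≠ 0}) (p : ℕ) :
    BddUpTo (annulus n) p g := by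
  refine BddUpTo.of_compact (K := closedBall 0 1 ∩ {x | 1 / 2 ≤ ‖x‖})
    ((isCompact_closedBall _ _).inter_right (isClosed_le continuous_const continuous_norm))
    isOpen_ne (fun x hx => ⟨mem_closedBall_zero_iff.mpr hx.2.le, hx.1.le⟩) (fun x hx => ?_) hg p
  have h : (1 / 2 : ℝ) ≤ ‖x‖ := hx.2
  exact norm_pos_iff.mp (by linarith)

/-- All derivatives of `N^k P_h[φ]` are bounded on the annulus: radial derivatives raise `k`,
tangential ones are absorbed in `φ`. -/
lemma Uint_bdd_annulus {q : ℕ} (hn : n = 2 * q + 2) (hn3 : 3 ≤ n) (p : ℕ) :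
    ∀ {φ : E n → ℝ}, ContDiff ℝ ∞ φ → ∀ k : ℕ,
      BddUpTo (annulus n) p ((NOp n)^[k] (Uint φ)) := by
  have hsub : annulus n ⊆ ball (0 : E n) 1 := fun x hx => mem_ball_zero_iff.mpr hx.2
  induction p with
  | zero =>
    intro φ hφ k
    refine ⟨(NOp_iter_contDiffOn isOpen_ball (Uint_contDiffOn hφ) k).mono hsub, fun m hm => ?_⟩
    obtain rfl : m = 0 := by lia
    obtain ⟨C, hC⟩ := NOp_Uint_bdd hn hn3 hφ k
    refine ⟨C, fun x hx => ?_⟩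
    rw [norm_iteratedFDeriv_zero]
    exact hC x (hsub hx)
  | succ p ih =>
    intro φ hφ k
    refine ⟨(NOp_iter_contDiffOn isOpen_ball (Uint_contDiffOn hφ) k).mono hsub, fun m hm => ?_⟩
    rcases m with _ | m
    · exact (ih hφ k).2 0 (Nat.zero_le _)
    have hinv : ContDiffOn ℝ ∞ (fun x : E n => (‖x‖ ^ 2)⁻¹) {x | x ≠ 0} :=
      (contDiff_norm_sq ℝ).contDiffOn.inv fun x hx => by
        have : x ≠ 0 := hx
        positivity
    have ha : ContDiffOn ℝ ∞ (fun x : E n => (‖x‖ ^ 2)⁻¹ • innerSL ℝ x) {x | x ≠ 0} :=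
      hinv.smul (innerSL ℝ).contDiff.contDiffOn
    have hb : ∀ i j : Fin n, ContDiffOn ℝ ∞ (fun x : E n => (‖x‖ ^ 2)⁻¹ •
        x i • (EuclideanSpace.proj j : E n →L[ℝ] ℝ)) {x | x ≠ 0} := fun i j =>
      hinv.smul (ContDiff.contDiffOn
        (((EuclideanSpace.proj i : E n →L[ℝ] ℝ).contDiff).smul contDiff_const))
    have hrot : ∀ i j : Fin n,
        BddUpTo (annulus n) p (linDer (rot i j) ((NOp n)^[k] (Uint φ))) := fun i j =>
      (ih (linDer_contDiff (rot i j) hφ) k).congr isOpen_annulus fun x hx =>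
        linDer_rot_NOp_Uint i j hφ k (hsub hx)
    have hN : BddUpTo (annulus n) p (NOp n ((NOp n)^[k] (Uint φ))) := by
      have := ih hφ (k + 1)
      rwa [Function.iterate_succ_apply'] at this
    have hfd : BddUpTo (annulus n) p (fderiv ℝ ((NOp n)^[k] (Uint φ))) :=
      ((hN.smul isOpen_annulus (annulus_coeff ha p)).add isOpen_annulus
        (BddUpTo.sum isOpen_annulus Finset.univ fun i => BddUpTo.sum isOpen_annulus Finset.univ
          fun j => (hrot i j).smul isOpen_annulus (annulus_coeff (hb i j) p))).congr
        isOpen_annulus fun x hx => fderiv_polar _ (norm_pos_iff.mp (by linarith [hx.1]))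
    obtain ⟨C, hC⟩ := hfd.2 m (by lia)
    exact ⟨C, fun x hx => by rw [← norm_iteratedFDeriv_fderiv]; exact hC x hx⟩

lemma Uint_iteratedFDeriv_bdd {q : ℕ} (hn : n = 2 * q + 2) (hn3 : 3 ≤ n) {φ : E n → ℝ}
    (hφ : ContDiff ℝ ∞ φ) (p : ℕ) :
    ∃ C, ∀ x ∈ ball (0 : E n) 1, ‖iteratedFDeriv ℝ p (Uint φ) x‖ ≤ C := by
  obtain ⟨C, hC⟩ := (Uint_bdd_annulus hn hn3 p hφ 0).2 p le_rfl
  obtain ⟨D, hD⟩ := (BddUpTo.of_compact (T := closedBall (0 : E n) (1 / 2))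
    (isCompact_closedBall _ _) isOpen_ball subset_rfl (closedBall_subset_ball (by norm_num))
    (Uint_contDiffOn hφ) p).2 p le_rfl
  refine ⟨max C D, fun x hx => ?_⟩
  rcases le_or_gt ‖x‖ (1 / 2) with h | h
  · exact (hD x (mem_closedBall_zero_iff.mpr h)).trans (le_max_right _ _)
  · exact (hC x ⟨h, mem_ball_zero_iff.mp hx⟩).trans (le_max_left _ _)

end derivBounds

/-! ### Extension to the closed ball -/

/-- A smooth function on the open unit ball all of whose derivatives are bounded extends to a
smooth function on the closed ball: every derivative is Lipschitz, so extends continuously, and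
the extended Taylor series is a Taylor series of the extended function. -/
lemma smooth_extension {n : ℕ} {f : E n → ℝ} (hf : ContDiffOn ℝ ∞ f (ball 0 1))
    (hb : ∀ p : ℕ, ∃ C, ∀ x ∈ ball (0 : E n) 1, ‖iteratedFDeriv ℝ p f x‖ ≤ C) :
    ∃ g : E n → ℝ, ContDiffOn ℝ ∞ g (closedBall 0 1) ∧ ∀ x ∈ ball (0 : E n) 1, g x = f x := by
  have hcl : closure (ball (0 : E n) 1) = closedBall 0 1 := closure_ball 0 one_ne_zero
  have hcd : ∀ m : ℕ, ContDiffOn ℝ ∞ (iteratedFDeriv ℝ m f) (ball (0 : E n) 1) := by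
    intro m x hx
    exact ((hf.contDiffAt (isOpen_ball.mem_nhds hx)).iteratedFDeriv_right (i := m) (m := ∞)
      le_rfl).contDiffWithinAt
  have hdiff : ∀ m : ℕ, ∀ x ∈ ball (0 : E n) 1, DifferentiableAt ℝ (iteratedFDeriv ℝ m f) x :=
    fun m x hx => ((hcd m).contDiffAt (isOpen_ball.mem_nhds hx)).differentiableAt (by simp)
  have hlim : ∀ m : ℕ, ∀ x ∈ closedBall (0 : E n) 1,
      ∃ y, Tendsto (iteratedFDeriv ℝ m f) (𝓝[ball 0 1] x) (𝓝 y) := by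
    intro m x hx
    obtain ⟨C, hC⟩ := hb (m + 1)
    refine exists_limit_of_lipschitz (C := C.toNNReal)
      ((convex_ball (0 : E n) 1).lipschitzOnWith_of_nnnorm_fderiv_le (hdiff m) fun y hy => ?_)
      (hcl ▸ hx)
    rw [← NNReal.coe_le_coe, coe_nnnorm, norm_fderiv_iteratedFDeriv]
    exact (hC y hy).trans (Real.le_coe_toNNReal C)
  let P : ∀ m : ℕ, E n → ContinuousMultilinearMap ℝ (fun _ : Fin m => E n) ℝ :=
    fun m => extendFrom (ball 0 1) (iteratedFDeriv ℝ m f)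
  have hPeq : ∀ m : ℕ, ∀ x ∈ ball (0 : E n) 1, P m x = iteratedFDeriv ℝ m f x := fun m x hx => by
    refine extendFrom_eq (subset_closure hx) ?_
    exact ((hcd m).continuousOn x hx)
  have hPcont : ∀ m : ℕ, ContinuousOn (P m) (closedBall (0 : E n) 1) := fun m =>
    continuousOn_extendFrom hcl.ge (hlim m)
  refine ⟨fun x => (P 0 x).curry0, ?_, fun x hx => ?_⟩
  · refine HasFTaylorSeriesUpToOn.contDiffOn (f' := fun x m => P m x) ⟨fun x _ => rfl, ?_, ?_⟩
    · intro m _ x hx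
      rw [← hcl]
      refine hasFDerivWithinAt_closure_of_tendsto_fderiv (s := ball (0 : E n) 1) ?_
        (convex_ball _ _) isOpen_ball ?_ ?_
      · exact ((hcd m).differentiableOn (by simp)).congr (hPeq m)
      · exact fun y hy => (hPcont m y (hcl ▸ hy)).mono ball_subset_closedBall
      · have h1 : Tendsto (P (m + 1)) (𝓝[ball 0 1] x) (𝓝 (P (m + 1) x)) :=
          (hPcont (m + 1) x hx).mono_left (nhdsWithin_mono _ ball_subset_closedBall)
        have h2 := ((continuousMultilinearCurryLeftEquiv ℝ (fun _ : Fin (m + 1) => E n)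
          ℝ).continuous.tendsto _).comp h1
        refine h2.congr' ?_
        filter_upwards [self_mem_nhdsWithin] with y hy
        have h3 : P m =ᶠ[𝓝 y] iteratedFDeriv ℝ m f := by
          filter_upwards [isOpen_ball.mem_nhds hy] with z hz using hPeq m z hz
        rw [h3.fderiv_eq, fderiv_iteratedFDeriv, Function.comp_apply, hPeq (m + 1) y hy]
        rfl
    · exact fun m _ => hPcont m
  · change (P 0 x).curry0 = f x
    rw [hPeq 0 x hx]
    simp

/-- For even `n ≥ 4` : for every smooth `φ` on `S^{n-1}`, the hyperbolic
Poisson integral `P_h[φ]` extends to a `C^∞` function on the closed unit ball; consequently,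
if `u` is `H`-harmonic on `B_n` with a boundary distribution, then `N^k u` has a boundary
distribution for every `k ≥ 0`. -/
theorem stmt12 (n : ℕ) (hn : 4 ≤ n) (heven : Even n) :
    (∀ φ : E n → ℝ, ContDiff ℝ ∞ φ →
      ∃ U : E n → ℝ, ContDiffOn ℝ ∞ U (closedBall (0 : E n) 1) ∧
        ∀ x ∈ ball (0 : E n) 1, U x = ∫ ξ, Ph n x ξ * φ ξ ∂(sphMeasure n)) ∧
    (∀ u : E n → ℝ, ContDiffOn ℝ ∞ u (ball (0 : E n) 1) → HHarmonic n u →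
      HasBoundaryDistribution n u →
      ∀ k : ℕ, HasBoundaryDistribution n ((NOp n)^[k] u)) := by
  obtain ⟨q, hq⟩ : ∃ q, n = 2 * q + 2 := by
    obtain ⟨m, rfl⟩ := heven
    exact ⟨m - 1, by omega⟩
  refine ⟨fun φ hφ => ?_, fun u hu hH hB k => boundary_normal hq hu hH hB k⟩
  exact smooth_extension (Uint_contDiffOn hφ)
    (Uint_iteratedFDeriv_bdd hq (by omega) hφ)
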